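/- Let u be a weak solution in B₁ and let x₀ ∈ ∂{u > 0} ∩ B₁. Suppose there is an open ball B = B_s(z) ⊆ B₁ with B ⊆ {u = 0} and x₀ ∈ ∂B (a ball in the zero set touching the free boundary at x₀). Then limsup_{x → x₀, u(x) > 0} u(x)/dist(x, B) ≥ Q(x₀); that is, for every ε > 0 and every ρ > 0 there exists x ∈ B_ρ(x₀) with u(x) > 0 and u(x) ≥ (Q(x₀) − ε) · dist(x, B). -/

import Mathlib

open MeasureTheory Metric Set Filter
open scoped ENNReal RealInnerProductSpace Topology NNReal

noncomputable section

variable {n : ℕ}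

/-- The Laplacian of `u : ℝⁿ → ℝ`, written with iterated directional derivatives. -/
def lap (u : EuclideanSpace ℝ (Fin n) → ℝ) (x : EuclideanSpace ℝ (Fin n)) : ℝ :=
  ∑ i : Fin n, fderiv ℝ (fun y => fderiv ℝ u y (EuclideanSpace.single i 1)) x
    (EuclideanSpace.single i 1)

/-- The positivity set `{u > 0}` of `u`, within the open unit ball `B₁`. -/
def posSet (u : EuclideanSpace ℝ (Fin n) → ℝ) : Set (EuclideanSpace ℝ (Fin n)) :=
  {x | x ∈ ball (0 : EuclideanSpace ℝ (Fin n)) 1 ∧ 0 < u x}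

/-- `U` coincides, inside some small ball around `z`, with the open region above the graph of an
`L`-Lipschitz function `φ` (vanishing at the origin) in some rotated coordinate frame. -/
def IsLipGraphNear (U : Set (EuclideanSpace ℝ (Fin n))) (z : EuclideanSpace ℝ (Fin n)) : Prop :=
  ∃ (r L : ℝ)
    (e : WithLp 2 (EuclideanSpace ℝ (Fin (n-1)) × ℝ) ≃ₗᵢ[ℝ] EuclideanSpace ℝ (Fin n))
    (φ : EuclideanSpace ℝ (Fin (n-1)) → ℝ),
    0 < r ∧ 0 < L ∧ LipschitzWith (Real.toNNReal L) φ ∧ φ 0 = 0 ∧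
    U ∩ ball z r =
      {p | ∃ y t, φ y < t ∧
        p = z + e ((WithLp.equiv 2 (EuclideanSpace ℝ (Fin (n-1)) × ℝ)).symm (y, t))} ∩ ball z r

/-- A bounded Lipschitz domain of `ℝⁿ`. -/
def IsLipschitzDomain (Ω : Set (EuclideanSpace ℝ (Fin n))) : Prop :=
  Bornology.IsBounded Ω ∧ IsOpen Ω ∧ IsConnected Ω ∧ ∀ x ∈ frontier Ω, IsLipGraphNear Ω x

/-- Near `z`, the set `S` is the graph of a `C^∞` function `ψ` (vanishing at the origin) in some
rotated coordinate frame: `S` is a smooth hypersurface near `z`. -/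
def IsSmoothGraphNear (S : Set (EuclideanSpace ℝ (Fin n))) (z : EuclideanSpace ℝ (Fin n)) : Prop :=
  ∃ (ρ : ℝ)
    (e : WithLp 2 (EuclideanSpace ℝ (Fin (n-1)) × ℝ) ≃ₗᵢ[ℝ] EuclideanSpace ℝ (Fin n))
    (ψ : EuclideanSpace ℝ (Fin (n-1)) → ℝ),
    0 < ρ ∧ ContDiff ℝ (⊤ : ℕ∞) ψ ∧ ψ 0 = 0 ∧
    S ∩ ball z ρ =
      {p | ∃ y t, t = ψ y ∧
        p = z + e ((WithLp.equiv 2 (EuclideanSpace ℝ (Fin (n-1)) × ℝ)).symm (y, t))} ∩ ball z ρ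

/-- `g` is the weak gradient of `u` on the set `s`. -/
def HasWeakGradOn (u : EuclideanSpace ℝ (Fin n) → ℝ)
    (g : EuclideanSpace ℝ (Fin n) → EuclideanSpace ℝ (Fin n))
    (s : Set (EuclideanSpace ℝ (Fin n))) : Prop :=
  ∀ η : EuclideanSpace ℝ (Fin n) → ℝ, ContDiff ℝ (⊤ : ℕ∞) η → HasCompactSupport η → tsupport η ⊆ s →
    ∀ v : EuclideanSpace ℝ (Fin n),
      ∫ x in s, u x * fderiv ℝ η x v = -∫ x in s, ⟪g x, v⟫ * η x

/-- `u` is a weak solution of the Alt–Caffarelli type problem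
`Δu = -f` in `{u>0} ∩ B₁`, `∂_ν u = Q` on `∂{u>0} ∩ B₁` (Definition 2.1). -/
structure IsWeakSolution (f Q u : EuclideanSpace ℝ (Fin n) → ℝ) : Prop where
  contOn : ContinuousOn u (ball 0 1)
  nonneg : ∀ x ∈ ball (0 : EuclideanSpace ℝ (Fin n)) 1, 0 ≤ u x
  c2 : ContDiffOn ℝ 2 u (posSet u)
  eqn : ∀ x ∈ posSet u, lap u x = - f x
  nondeg : ∀ D : Set (EuclideanSpace ℝ (Fin n)), IsOpen D →
    closure D ⊆ ball (0 : EuclideanSpace ℝ (Fin n)) 1 →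
    ∃ c C : ℝ, 0 < c ∧ c ≤ C ∧ ∀ x r, 0 < r → ball x r ⊆ D → x ∈ frontier (posSet u) →
      c ≤ (1/r) * ⨍ y in sphere x r, u y ∂(μH[(n-1:ℝ)]) ∧
      (1/r) * ⨍ y in sphere x r, u y ∂(μH[(n-1:ℝ)]) ≤ C
  locLip : ∀ K : Set (EuclideanSpace ℝ (Fin n)), IsCompact K →
    K ⊆ ball (0 : EuclideanSpace ℝ (Fin n)) 1 → ∃ L : ℝ≥0, LipschitzOnWith L u K
  weakEq : ∀ η : EuclideanSpace ℝ (Fin n) → ℝ, ContDiff ℝ (⊤ : ℕ∞) η → HasCompactSupport η →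
    tsupport η ⊆ ball (0 : EuclideanSpace ℝ (Fin n)) 1 →
    -∫ x in ball (0 : EuclideanSpace ℝ (Fin n)) 1, ⟪gradient u x, gradient η x⟫
      = ∫ x in frontier (posSet u) ∩ ball (0 : EuclideanSpace ℝ (Fin n)) 1,
          Q x * η x ∂(μH[(n-1:ℝ)])
        - ∫ x in posSet u, f x * η x



/-! ### The cut-off profile -/

/-- Smooth convex cut-off. -/
def chi (v : ℝ) : ℝ := ∫ t in (0:ℝ)..v, Real.smoothTransition t

lemma chi_hasDerivAt (v : ℝ) : HasDerivAt chi (Real.smoothTransition v) v :=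
  Real.smoothTransition.continuous.integral_hasStrictDerivAt 0 v |>.hasDerivAt

lemma chi_deriv : deriv chi = Real.smoothTransition := funext fun v => (chi_hasDerivAt v).deriv

lemma chi_contDiff : ContDiff ℝ (⊤ : ℕ∞) chi := by
  rw [contDiff_infty_iff_deriv]
  refine ⟨fun v => (chi_hasDerivAt v).differentiableAt, ?_⟩
  rw [chi_deriv]
  exact Real.smoothTransition.contDiff

lemma chi_mono : Monotone chi := by
  apply monotone_of_deriv_nonneg (fun v => (chi_hasDerivAt v).differentiableAt)
  intro v
  rw [chi_deriv]
  exact Real.smoothTransition.nonneg v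

lemma chi_of_nonpos {v : ℝ} (hv : v ≤ 0) : chi v = 0 := by
  unfold chi
  rw [intervalIntegral.integral_symm]
  rw [intervalIntegral.integral_congr (g := fun _ => (0:ℝ))]
  · simp
  · intro t ht
    rw [uIcc_of_le hv] at ht
    exact Real.smoothTransition.zero_of_nonpos ht.2

lemma chi_pos {v : ℝ} (hv : 0 < v) : 0 < chi v := by
  unfold chi
  apply intervalIntegral.intervalIntegral_pos_of_pos_on
  · exact Real.smoothTransition.continuous.intervalIntegrable _ _
  · intro t ht
    exact Real.smoothTransition.pos_of_pos ht.1
  · exact hv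

lemma chi_nonneg (v : ℝ) : 0 ≤ chi v := by
  rcases le_or_gt v 0 with h | h
  · exact (chi_of_nonpos h).ge
  · exact (chi_pos h).le

lemma trans_hasDerivAt (v : ℝ) :
    HasDerivAt Real.smoothTransition (deriv Real.smoothTransition v) v :=
  ((Real.smoothTransition.contDiff (n := 1)).differentiable (by simp) v).hasDerivAt

/-- Radial profile (as a function of the squared norm) and its derivatives. -/
def psi (p a c t : ℝ) : ℝ := chi ((t + a) ^ (-p) - c)
def psi1 (p a c t : ℝ) : ℝ :=
  Real.smoothTransition ((t + a) ^ (-p) - c) * (-p * (t + a) ^ (-p - 1))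
def psi2 (p a c t : ℝ) : ℝ :=
  deriv Real.smoothTransition ((t + a) ^ (-p) - c) * (-p * (t + a) ^ (-p - 1)) ^ 2 +
  Real.smoothTransition ((t + a) ^ (-p) - c) * (p * (p + 1) * (t + a) ^ (-p - 2))

lemma rpow_hasDerivAt (q a : ℝ) {t : ℝ} (ht : 0 < t + a) :
    HasDerivAt (fun t : ℝ => (t + a) ^ q) (q * (t + a) ^ (q - 1)) t := by
  have := ((hasDerivAt_id t).add_const a).rpow_const (p := q) (Or.inl ht.ne')
  simpa using this

lemma psi_hasDerivAt (p a c : ℝ) {t : ℝ} (ht : 0 < t + a) :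
    HasDerivAt (psi p a c) (psi1 p a c t) t := by
  have h := (rpow_hasDerivAt (-p) a ht).sub_const c
  exact (chi_hasDerivAt ((t + a) ^ (-p) - c)).comp t h

lemma psi1_hasDerivAt (p a c : ℝ) {t : ℝ} (ht : 0 < t + a) :
    HasDerivAt (psi1 p a c) (psi2 p a c t) t := by
  have h := (rpow_hasDerivAt (-p) a ht).sub_const c
  have h1 := (trans_hasDerivAt ((t + a) ^ (-p) - c)).comp t h
  have h2 := (rpow_hasDerivAt (-p - 1) a ht).const_mul (-p)
  refine (h1.mul h2).congr_deriv ?_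
  unfold psi2
  have : -p - 1 - 1 = -p - 2 := by ring
  rw [this]
  simp only [Function.comp]
  ring

lemma psi_antitone {p a c : ℝ} (hp : 0 < p) {t t' : ℝ} (ht : 0 < t + a) (h : t ≤ t') :
    psi p a c t' ≤ psi p a c t := by
  apply chi_mono
  have := Real.rpow_le_rpow_of_nonpos (z := -p) ht (by linarith : t + a ≤ t' + a) (by linarith)
  linarith

lemma psi_nonneg (p a c t : ℝ) : 0 ≤ psi p a c t := chi_nonneg _

/-- sign of the radial Laplacian away from the centre -/
lemma lapl_nonneg {p a c d t : ℝ} (hp : 0 < p) (ha : 0 < a) (ht : 0 ≤ t)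
    (hd : d * (t + a) ≤ 2 * (p + 1) * t) :
    0 ≤ 4 * t * psi2 p a c t + 2 * d * psi1 p a c t := by
  have hta : 0 < t + a := by linarith
  have e1 : (t + a) ^ (-p - 1) = (t + a) ^ (-p - 2) * (t + a) := by
    rw [← Real.rpow_add_one hta.ne']; congr 1; ring
  have h0 : 0 ≤ deriv Real.smoothTransition ((t + a) ^ (-p) - c) :=
    Real.smoothTransition.monotone.deriv_nonneg
  have h1 : 0 ≤ Real.smoothTransition ((t + a) ^ (-p) - c) := Real.smoothTransition.nonneg _
  have h2 : 0 < (t + a) ^ (-p - 2) := Real.rpow_pos_of_pos hta _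
  have : 4 * t * psi2 p a c t + 2 * d * psi1 p a c t =
      4 * t * (deriv Real.smoothTransition ((t + a) ^ (-p) - c) * (-p * (t + a) ^ (-p - 1)) ^ 2)
      + Real.smoothTransition ((t + a) ^ (-p) - c) * (t + a) ^ (-p - 2) * (2 * p) *
        (2 * (p + 1) * t - d * (t + a)) := by
    unfold psi2 psi1
    rw [e1]; ring
  rw [this]
  have : 0 ≤ 2 * (p + 1) * t - d * (t + a) := by linarith
  positivity

lemma lapl_pos {p a c d t : ℝ} (hp : 0 < p) (ha : 0 < a) (ht : 0 ≤ t)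
    (hd : d * (t + a) < 2 * (p + 1) * t) (hc : c < (t + a) ^ (-p)) :
    0 < 4 * t * psi2 p a c t + 2 * d * psi1 p a c t := by
  have hta : 0 < t + a := by linarith
  have e1 : (t + a) ^ (-p - 1) = (t + a) ^ (-p - 2) * (t + a) := by
    rw [← Real.rpow_add_one hta.ne']; congr 1; ring
  have h0 : 0 ≤ deriv Real.smoothTransition ((t + a) ^ (-p) - c) :=
    Real.smoothTransition.monotone.deriv_nonneg
  have h1 : 0 < Real.smoothTransition ((t + a) ^ (-p) - c) :=
    Real.smoothTransition.pos_of_pos (by linarith)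
  have h2 : 0 < (t + a) ^ (-p - 2) := Real.rpow_pos_of_pos hta _
  have : 4 * t * psi2 p a c t + 2 * d * psi1 p a c t =
      4 * t * (deriv Real.smoothTransition ((t + a) ^ (-p) - c) * (-p * (t + a) ^ (-p - 1)) ^ 2)
      + Real.smoothTransition ((t + a) ^ (-p) - c) * (t + a) ^ (-p - 2) * (2 * p) *
        (2 * (p + 1) * t - d * (t + a)) := by
    unfold psi2 psi1
    rw [e1]; ring
  rw [this]
  have : 0 < 2 * (p + 1) * t - d * (t + a) := by linarith
  positivity

lemma lapl_lower {p a c d t : ℝ} (hp : 0 < p) (ha : 0 < a) (ht : 0 ≤ t) (hd : 0 ≤ d) :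
    -(2 * d * p * a ^ (-p - 1)) ≤ 4 * t * psi2 p a c t + 2 * d * psi1 p a c t := by
  have hta : 0 < t + a := by linarith
  have h0 : 0 ≤ deriv Real.smoothTransition ((t + a) ^ (-p) - c) :=
    Real.smoothTransition.monotone.deriv_nonneg
  have h1 : 0 ≤ Real.smoothTransition ((t + a) ^ (-p) - c) := Real.smoothTransition.nonneg _
  have h1' : Real.smoothTransition ((t + a) ^ (-p) - c) ≤ 1 := Real.smoothTransition.le_one _
  have h2 : 0 < (t + a) ^ (-p - 2) := Real.rpow_pos_of_pos hta _
  have h3 : 0 < (t + a) ^ (-p - 1) := Real.rpow_pos_of_pos hta _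
  have h4 : (t + a) ^ (-p - 1) ≤ a ^ (-p - 1) :=
    Real.rpow_le_rpow_of_nonpos ha (by linarith) (by linarith)
  have h5 : 0 ≤ psi2 p a c t := by unfold psi2; positivity
  have h6 : Real.smoothTransition ((t + a) ^ (-p) - c) * (t + a) ^ (-p - 1) ≤ a ^ (-p - 1) := by
    calc _ ≤ 1 * a ^ (-p - 1) := by gcongr
      _ = _ := one_mul _
  have h7 : 2 * d * psi1 p a c t = -(2 * d * p *
      (Real.smoothTransition ((t + a) ^ (-p) - c) * (t + a) ^ (-p - 1))) := by unfold psi1; ring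
  have h8 : 2 * d * p * (Real.smoothTransition ((t + a) ^ (-p) - c) * (t + a) ^ (-p - 1))
     ≤ 2 * d * p * a ^ (-p - 1) := by gcongr
  have : 0 ≤ 4 * t * psi2 p a c t := by positivity
  linarith

/-- radial test function -/
def rad (p a c k : ℝ) (y x : EuclideanSpace ℝ (Fin n)) : ℝ := psi p a c (k * ‖x - y‖ ^ 2)

lemma rad_contDiff (p a c k : ℝ) (ha : 0 < a) (hk : 0 ≤ k) (y : EuclideanSpace ℝ (Fin n)) :
    ContDiff ℝ (⊤ : ℕ∞) (rad p a c k y) := by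
  unfold rad psi
  refine chi_contDiff.comp (ContDiff.sub ?_ contDiff_const)
  refine ContDiff.rpow_const_of_ne ?_ ?_
  · exact (contDiff_const.mul ((contDiff_id.sub contDiff_const).norm_sq ℝ)).add contDiff_const
  · intro x
    have : 0 ≤ k * ‖x - y‖ ^ 2 := by positivity
    linarith

lemma rad_fderiv (p a c k : ℝ) (ha : 0 < a) (hk : 0 ≤ k) (x y v : EuclideanSpace ℝ (Fin n)) :
    fderiv ℝ (rad p a c k y) x v = psi1 p a c (k * ‖x - y‖ ^ 2) * (2 * k * ⟪x - y, v⟫) := by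
  have h0 : 0 < k * ‖x - y‖ ^ 2 + a := by positivity
  have h1 : HasFDerivAt (fun x => ‖x - y‖ ^ 2) _ x :=
    ((hasFDerivAt_id x).sub_const y).norm_sq
  have h2 := (psi_hasDerivAt p a c h0).comp_hasFDerivAt x (h1.const_mul k)
  have h3 : HasFDerivAt (rad p a c k y) _ x := h2
  rw [h3.fderiv]
  simp [inner_sub_left, -mul_eq_mul_left_iff]
  ring

lemma rad_lap (p a c k : ℝ) (ha : 0 < a) (hk : 0 ≤ k) (x y : EuclideanSpace ℝ (Fin n)) :
    lap (rad p a c k y) x = k * (4 * (k * ‖x - y‖ ^ 2) * psi2 p a c (k * ‖x - y‖ ^ 2) +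
      2 * n * psi1 p a c (k * ‖x - y‖ ^ 2)) := by
  have h0 : 0 < k * ‖x - y‖ ^ 2 + a := by positivity
  have key : ∀ v : EuclideanSpace ℝ (Fin n),
      fderiv ℝ (fun x' => fderiv ℝ (rad p a c k y) x' v) x v =
      psi2 p a c (k * ‖x - y‖ ^ 2) * (2 * k * ⟪x - y, v⟫) ^ 2 +
      psi1 p a c (k * ‖x - y‖ ^ 2) * (2 * k * ‖v‖ ^ 2) := by
    intro v
    simp_rw [fun x' => rad_fderiv p a c k ha hk x' y v]
    have h1 : HasFDerivAt (fun x => ‖x - y‖ ^ 2) _ x :=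
      ((hasFDerivAt_id x).sub_const y).norm_sq
    have h2 := (psi1_hasDerivAt p a c h0).comp_hasFDerivAt x (h1.const_mul k)
    have h3 : HasFDerivAt (fun x' => ⟪x' - y, v⟫) _ x :=
      ((hasFDerivAt_id x).sub_const y).inner ℝ (hasFDerivAt_const v x)
    have h4 := h2.mul (h3.const_mul (2 * k))
    have h5 : HasFDerivAt (fun x' => psi1 p a c (k * ‖x' - y‖ ^ 2) * (2 * k * ⟪x' - y, v⟫)) _ x := h4
    rw [h5.fderiv]
    simp [inner_sub_left, fderivInnerCLM_apply]
    ring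
  unfold lap
  simp_rw [key, Finset.sum_add_distrib]
  have hs : ∑ i : Fin n, ⟪x - y, (EuclideanSpace.single i 1 : EuclideanSpace ℝ (Fin n))⟫ ^ 2
      = ‖x - y‖ ^ 2 := by
    rw [EuclideanSpace.norm_sq_eq]
    simp [EuclideanSpace.inner_single_right]
  have : ∀ i : Fin n, psi2 p a c (k * ‖x - y‖ ^ 2) *
     (2 * k * ⟪x - y, (EuclideanSpace.single i 1 : EuclideanSpace ℝ (Fin n))⟫) ^ 2 =
     psi2 p a c (k * ‖x - y‖ ^ 2) * (4 * k ^ 2) *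
      ⟪x - y, (EuclideanSpace.single i 1 : EuclideanSpace ℝ (Fin n))⟫ ^ 2 := fun i => by ring
  simp_rw [this, ← Finset.mul_sum, hs]
  simp
  ring


/-! ### Integration by parts -/

lemma fderiv_apply_contDiff {η : EuclideanSpace ℝ (Fin n) → ℝ} (hη : ContDiff ℝ (⊤ : ℕ∞) η)
    (v : EuclideanSpace ℝ (Fin n)) : ContDiff ℝ (⊤ : ℕ∞) (fun x => fderiv ℝ η x v) :=
  (hη.fderiv_right (m := (⊤ : ℕ∞)) (by simp)).clm_apply contDiff_const

lemma fderiv_apply_compact {η : EuclideanSpace ℝ (Fin n) → ℝ} (hc : HasCompactSupport η)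
    (v : EuclideanSpace ℝ (Fin n)) : HasCompactSupport (fun x => fderiv ℝ η x v) :=
  (hc.fderiv (𝕜 := ℝ)).comp_left (g := fun T : _ →L[ℝ] ℝ => T v) (by simp)

lemma lap_continuous {η : EuclideanSpace ℝ (Fin n) → ℝ} (hη : ContDiff ℝ (⊤ : ℕ∞) η) :
    Continuous (lap η) := by
  unfold lap
  refine continuous_finsetSum _ fun i _ => ?_
  exact (fderiv_apply_contDiff (fderiv_apply_contDiff hη _) _).continuous

lemma fderiv_zero_off {η : EuclideanSpace ℝ (Fin n) → ℝ} {x : EuclideanSpace ℝ (Fin n)}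
    (hx : x ∉ tsupport η) : fderiv ℝ η x = 0 := by
  by_contra h
  exact hx (tsupport_fderiv_subset ℝ (subset_tsupport _ h))

lemma lap_zero_off {η : EuclideanSpace ℝ (Fin n) → ℝ} {x : EuclideanSpace ℝ (Fin n)}
    (hx : x ∉ tsupport η) : lap η x = 0 := by
  unfold lap
  refine Finset.sum_eq_zero fun i _ => ?_
  have : (fun y => fderiv ℝ η y (EuclideanSpace.single i 1)) =ᶠ[𝓝 x] fun _ => (0 : ℝ) := by
    filter_upwards [(isClosed_tsupport η).isOpen_compl.mem_nhds hx] with y hy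
    rw [fderiv_zero_off hy]; rfl
  rw [this.fderiv_eq]
  simp

lemma lap_add_smul {η ζ : EuclideanSpace ℝ (Fin n) → ℝ} (hη : ContDiff ℝ (⊤ : ℕ∞) η)
    (hζ : ContDiff ℝ (⊤ : ℕ∞) ζ) (t : ℝ) (x : EuclideanSpace ℝ (Fin n)) :
    lap (fun x => ζ x + t * η x) x = lap ζ x + t * lap η x := by
  have d1 : ∀ {η : EuclideanSpace ℝ (Fin n) → ℝ}, ContDiff ℝ (⊤ : ℕ∞) η → Differentiable ℝ η :=
    fun h => h.differentiable (by simp)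
  unfold lap
  rw [Finset.mul_sum, ← Finset.sum_add_distrib]
  refine Finset.sum_congr rfl fun i _ => ?_
  have : (fun y => fderiv ℝ (fun x => ζ x + t * η x) y (EuclideanSpace.single i 1)) =
      fun y => fderiv ℝ ζ y (EuclideanSpace.single i 1) +
        t * fderiv ℝ η y (EuclideanSpace.single i 1) := by
    funext y
    rw [fderiv_fun_add (d1 hζ y) ((d1 hη y).const_mul t), fderiv_const_mul (d1 hη y)]
    simp
  rw [this, fderiv_fun_add (d1 (fderiv_apply_contDiff hζ _) x)
    ((d1 (fderiv_apply_contDiff hη _) x).const_mul t),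
    fderiv_const_mul (d1 (fderiv_apply_contDiff hη _) x)]
  simp

lemma lineDeriv_mul_integrable {L : ℝ≥0} {U : EuclideanSpace ℝ (Fin n) → ℝ}
    (hU : LipschitzWith L U)
    {η : EuclideanSpace ℝ (Fin n) → ℝ} (hη : ContDiff ℝ (⊤ : ℕ∞) η) (hc : HasCompactSupport η)
    (v : EuclideanSpace ℝ (Fin n)) :
    Integrable (fun x => lineDeriv ℝ U x v * fderiv ℝ η x v) := by
  have := (hU.locallyIntegrable_lineDeriv (μ := volume) v).integrable_smul_right_of_hasCompactSupport
    (fderiv_apply_contDiff hη v).continuous (fderiv_apply_compact hc v)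
  simpa using this

lemma ibp {L : ℝ≥0} {U : EuclideanSpace ℝ (Fin n) → ℝ} (hU : LipschitzWith L U)
    {η : EuclideanSpace ℝ (Fin n) → ℝ} (hη : ContDiff ℝ (⊤ : ℕ∞) η) (hc : HasCompactSupport η) :
    ∫ x, U x * lap η x = - ∫ x, ∑ i : Fin n, lineDeriv ℝ U x (EuclideanSpace.single i 1) *
      fderiv ℝ η x (EuclideanSpace.single i 1) := by
  rw [integral_finsetSum _ fun i _ => lineDeriv_mul_integrable hU hη hc _]
  have key : ∀ i : Fin n, ∫ x, lineDeriv ℝ U x (EuclideanSpace.single i 1) *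
      fderiv ℝ η x (EuclideanSpace.single i 1) =
      - ∫ x, U x * fderiv ℝ (fun y => fderiv ℝ η y (EuclideanSpace.single i 1)) x
        (EuclideanSpace.single i 1) := by
    intro i
    have hg := fderiv_apply_contDiff hη (EuclideanSpace.single i 1)
    obtain ⟨D, hD⟩ := ContDiff.lipschitzWith_of_hasCompactSupport
      (fderiv_apply_compact hc (EuclideanSpace.single i 1)) hg (by simp)
    rw [hU.integral_lineDeriv_mul_eq hD (fderiv_apply_compact hc (EuclideanSpace.single i 1)),
      ← integral_neg]
    congr 1
    funext x
    rw [(hg.differentiable (by simp) x).lineDeriv_eq_fderiv]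
    simp
    ring
  simp_rw [key]
  rw [Finset.sum_neg_distrib, neg_neg, ← integral_finsetSum]
  · simp_rw [lap, Finset.mul_sum]
  · intro i _
    have hg := fderiv_apply_contDiff hη (EuclideanSpace.single i 1)
    apply Continuous.integrable_of_hasCompactSupport
    · exact hU.continuous.mul (fderiv_apply_contDiff hg _).continuous
    · exact (fderiv_apply_compact (fderiv_apply_compact hc _) _).mul_left

lemma inner_gradient_eq_sum {u η : EuclideanSpace ℝ (Fin n) → ℝ} (x : EuclideanSpace ℝ (Fin n)) :
    ⟪gradient u x, gradient η x⟫ = ∑ i : Fin n, fderiv ℝ u x (EuclideanSpace.single i 1) *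
      fderiv ℝ η x (EuclideanSpace.single i 1) := by
  have h : ∀ (w : EuclideanSpace ℝ (Fin n) → ℝ) (v : EuclideanSpace ℝ (Fin n)),
      fderiv ℝ w x v = ⟪gradient w x, v⟫ := by
    intro w v
    simp [gradient]
  simp_rw [h]
  rw [PiLp.inner_apply]
  refine Finset.sum_congr rfl fun i _ => ?_
  rw [EuclideanSpace.inner_single_right, EuclideanSpace.inner_single_right]
  simp [mul_comm]

lemma mul_lap_continuous {u : EuclideanSpace ℝ (Fin n) → ℝ} (hu : ContinuousOn u (ball 0 1))
    {η : EuclideanSpace ℝ (Fin n) → ℝ} (hη : ContDiff ℝ (⊤ : ℕ∞) η)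
    (hs : tsupport η ⊆ ball (0 : EuclideanSpace ℝ (Fin n)) 1) :
    Continuous (fun x => u x * lap η x) := by
  rw [continuous_iff_continuousAt]
  intro x
  by_cases hx : x ∈ tsupport η
  · exact (hu.continuousAt (isOpen_ball.mem_nhds (hs hx))).mul (lap_continuous hη).continuousAt
  · have : (fun x => u x * lap η x) =ᶠ[𝓝 x] fun _ => (0 : ℝ) := by
      filter_upwards [(isClosed_tsupport η).isOpen_compl.mem_nhds hx] with y hy
      rw [lap_zero_off hy, mul_zero]
    exact continuousAt_const.congr this.symm

lemma mul_lap_compact {u : EuclideanSpace ℝ (Fin n) → ℝ}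
    {η : EuclideanSpace ℝ (Fin n) → ℝ} (hc : HasCompactSupport η) :
    HasCompactSupport (fun x => u x * lap η x) := by
  refine HasCompactSupport.intro hc fun x hx => ?_
  rw [lap_zero_off hx, mul_zero]

/-- The weak equation in its distributional (Laplacian) form. -/
lemma weakLap {f Q u : EuclideanSpace ℝ (Fin n) → ℝ} (hu : IsWeakSolution f Q u)
    {η : EuclideanSpace ℝ (Fin n) → ℝ} (hη : ContDiff ℝ (⊤ : ℕ∞) η) (hc : HasCompactSupport η)
    (hs : tsupport η ⊆ ball (0 : EuclideanSpace ℝ (Fin n)) 1) :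
    ∫ x, u x * lap η x = ∫ x in frontier (posSet u) ∩ ball (0 : EuclideanSpace ℝ (Fin n)) 1,
          Q x * η x ∂(μH[(n-1:ℝ)]) - ∫ x in posSet u, f x * η x := by
  rw [← hu.weakEq η hη hc hs]
  obtain ⟨δ, hδ, hδs⟩ := hc.isCompact.exists_cthickening_subset_open isOpen_ball hs
  obtain ⟨L, hL⟩ := hu.locLip _ (hc.isCompact.cthickening (r := δ)) hδs
  obtain ⟨U, hU, hUu⟩ := hL.extend_real
  have h1 : ∫ x, u x * lap η x = ∫ x, U x * lap η x := by
    congr 1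
    funext x
    by_cases hx : x ∈ tsupport η
    · rw [hUu (self_subset_cthickening _ hx)]
    · rw [lap_zero_off hx]; simp
  rw [h1, ibp hU hη hc, setIntegral_eq_integral_of_forall_compl_eq_zero]
  · congr 1
    apply integral_congr_ae
    filter_upwards [hU.ae_differentiableAt (μ := volume)] with x hx
    rw [inner_gradient_eq_sum]
    refine Finset.sum_congr rfl fun i _ => ?_
    by_cases hxs : x ∈ tsupport η
    · have : u =ᶠ[𝓝 x] U := by
        have : thickening δ (tsupport η) ∈ 𝓝 x :=
          isOpen_thickening.mem_nhds (self_subset_thickening hδ _ hxs)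
        filter_upwards [this] with y hy
        exact hUu (thickening_subset_cthickening _ _ hy)
      rw [hx.lineDeriv_eq_fderiv, this.fderiv_eq]
    · rw [fderiv_zero_off hxs]; simp
  · intro x hx
    rw [inner_gradient_eq_sum, fderiv_zero_off (fun h => hx (hs h))]
    simp


/-! ### Integrability on the free boundary -/

lemma rad_eq_zero {p a c k r : ℝ} (hp : 0 < p) (ha : 0 < a) (hk : 0 ≤ k) (hr : 0 ≤ r)
    (hc : (k * r ^ 2 + a) ^ (-p) ≤ c) (x y : EuclideanSpace ℝ (Fin n)) (hx : r ≤ ‖x - y‖) :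
    rad p a c k y x = 0 := by
  apply chi_of_nonpos
  have h1 : k * r ^ 2 + a ≤ k * ‖x - y‖ ^ 2 + a := by gcongr
  have := Real.rpow_le_rpow_of_nonpos (z := -p) (by positivity : 0 < k * r ^ 2 + a) h1 (by linarith)
  linarith

lemma rad_tsupport {p a c k r : ℝ} (hp : 0 < p) (ha : 0 < a) (hk : 0 ≤ k) (hr : 0 ≤ r)
    (hc : (k * r ^ 2 + a) ^ (-p) ≤ c) (y : EuclideanSpace ℝ (Fin n)) :
    tsupport (rad p a c k y) ⊆ closedBall y r := by
  apply closure_minimal _ isClosed_closedBall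
  intro x hx
  rw [mem_closedBall, dist_eq_norm]
  by_contra h
  exact hx (rad_eq_zero hp ha hk hr hc x y (not_le.1 h).le)

lemma rad_compact {p a c k r : ℝ} (hp : 0 < p) (ha : 0 < a) (hk : 0 ≤ k) (hr : 0 ≤ r)
    (hc : (k * r ^ 2 + a) ^ (-p) ≤ c) (y : EuclideanSpace ℝ (Fin n)) :
    HasCompactSupport (rad p a c k y) :=
  (isCompact_closedBall y r).of_isClosed_subset (isClosed_tsupport _)
    (rad_tsupport hp ha hk hr hc y)

lemma rad_nonneg (p a c k : ℝ) (x y : EuclideanSpace ℝ (Fin n)) : 0 ≤ rad p a c k y x :=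
  psi_nonneg _ _ _ _

lemma gamma_measurable (u : EuclideanSpace ℝ (Fin n) → ℝ) :
    MeasurableSet (frontier (posSet u) ∩ ball (0 : EuclideanSpace ℝ (Fin n)) 1) :=
  isClosed_frontier.measurableSet.inter measurableSet_ball

lemma posSet_measurable {f Q u : EuclideanSpace ℝ (Fin n) → ℝ} (hu : IsWeakSolution f Q u) :
    MeasurableSet (posSet u) := by
  have : IsOpen (ball (0 : EuclideanSpace ℝ (Fin n)) 1 ∩ u ⁻¹' Ioi 0) :=
    hu.contOn.isOpen_inter_preimage isOpen_ball isOpen_Ioi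
  exact this.measurableSet

lemma gamma_integrable (hn : 2 ≤ n) {f Q u : EuclideanSpace ℝ (Fin n) → ℝ} {Qmin : ℝ}
    (hf0 : ∀ x ∈ ball (0 : EuclideanSpace ℝ (Fin n)) 1, 0 ≤ f x)
    (hQ : ContinuousOn Q (ball 0 1)) (hQmin : 0 < Qmin)
    (hQb : ∀ x ∈ ball (0 : EuclideanSpace ℝ (Fin n)) 1, Qmin ≤ Q x)
    (hu : IsWeakSolution f Q u)
    {x₀ z : EuclideanSpace ℝ (Fin n)} {s : ℝ} (hs : 0 < s)
    (hx₀ : x₀ ∈ frontier (posSet u))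
    (hB : closedBall z s ⊆ ball (0 : EuclideanSpace ℝ (Fin n)) 1)
    (hBzero : ∀ x ∈ ball z s, u x = 0)
    (htouch : x₀ ∈ sphere z s)
    {η : EuclideanSpace ℝ (Fin n) → ℝ} (hη : ContDiff ℝ (⊤ : ℕ∞) η) (hc : HasCompactSupport η)
    (hsup : tsupport η ⊆ ball (0 : EuclideanSpace ℝ (Fin n)) 1) (hη0 : ∀ x, 0 ≤ η x) :
    IntegrableOn (fun x => Q x * η x) (frontier (posSet u) ∩ ball 0 1) (μH[(n-1:ℝ)]) := by
  by_contra hni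
  have hn' : (2:ℝ) ≤ n := by exact_mod_cast hn
  set p : ℝ := n / 2 - 3 / 4 with hp_def
  have hp : 0 < p := by rw [hp_def]; linarith
  obtain ⟨δ, hδ, hδs⟩ := (isCompact_closedBall z s).exists_cthickening_subset_open isOpen_ball hB
  set R := s + δ with hR
  have hRs : closedBall z R ⊆ ball (0 : EuclideanSpace ℝ (Fin n)) 1 := by
    refine Subset.trans ?_ hδs
    rw [cthickening_closedBall hδ.le hs.le, hR, add_comm]
  set a : ℝ := s ^ 2 / (4 * n) with ha_def
  have ha : 0 < a := by positivity
  set c : ℝ := (1 * R ^ 2 + a) ^ (-p) with hc_def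
  set ζ : EuclideanSpace ℝ (Fin n) → ℝ := rad p a c 1 z with hζ_def
  have hR0 : 0 ≤ R := by positivity
  have hζ : ContDiff ℝ (⊤ : ℕ∞) ζ := rad_contDiff p a c 1 ha zero_le_one z
  have hζc : HasCompactSupport ζ := rad_compact hp ha zero_le_one hR0 le_rfl z
  have hζs : tsupport ζ ⊆ ball 0 1 := (rad_tsupport hp ha zero_le_one hR0 le_rfl z).trans hRs
  have hζ0 : ∀ x, 0 ≤ ζ x := fun x => rad_nonneg _ _ _ _ _ _
  -- the modified test functions
  have hle : ∀ t : ℝ, 0 < t → ∫ x, u x * lap ζ x + t * (u x * lap η x) ≤ 0 := by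
    intro t ht
    set θ : EuclideanSpace ℝ (Fin n) → ℝ := fun x => ζ x + t * η x with hθ_def
    have hθ : ContDiff ℝ (⊤ : ℕ∞) θ := hζ.add (contDiff_const.mul hη)
    have hθc : HasCompactSupport θ := hζc.add hc.mul_left
    have hθs : tsupport θ ⊆ ball 0 1 := by
      refine (tsupport_add _ _).trans (union_subset hζs ?_)
      refine Subset.trans ?_ hsup
      exact closure_mono (Function.support_mul_subset_right _ _)
    have hθ0 : ∀ x, 0 ≤ θ x := fun x => by
      have := hζ0 x; have := hη0 x
      simp only [hθ_def]; positivity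
    have h := weakLap hu hθ hθc hθs
    rw [integral_undef (f := fun x => Q x * θ x)
      (μ := (μH[(n-1:ℝ)]).restrict (frontier (posSet u) ∩ ball 0 1))] at h
    · have h2 : ∫ x, u x * lap ζ x + t * (u x * lap η x) = ∫ x, u x * lap θ x := by
        congr 1; funext x
        rw [hθ_def, lap_add_smul hη hζ]; ring
      rw [h2, h, zero_sub, neg_nonpos]
      apply setIntegral_nonneg (posSet_measurable hu)
      intro x hx
      exact mul_nonneg (hf0 x hx.1) (hθ0 x)
    · intro hInt
      apply hni
      have hInt' := hInt.const_mul (t⁻¹)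
      refine Integrable.mono' hInt' ?_ ?_
      · apply ContinuousOn.aestronglyMeasurable _ (gamma_measurable u)
        exact (hQ.mono inter_subset_right).mul hη.continuous.continuousOn
      · refine (ae_restrict_iff' (gamma_measurable u)).2 (.of_forall fun x hx => ?_)
        have hq : 0 ≤ Q x := (hQmin.trans_le (hQb x hx.2)).le
        rw [Real.norm_of_nonneg (mul_nonneg hq (hη0 x))]
        have : t⁻¹ * (Q x * θ x) = Q x * η x + t⁻¹ * (Q x * ζ x) := by
          simp only [hθ_def]; field_simp; ring
        rw [this]
        have := hζ0 x
        have : 0 ≤ t⁻¹ * (Q x * ζ x) := by positivity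
        linarith
  have hi1 : Integrable (fun x => u x * lap ζ x) :=
    (mul_lap_continuous hu.contOn hζ hζs).integrable_of_hasCompactSupport (mul_lap_compact hζc)
  have hi2 : Integrable (fun x => u x * lap η x) :=
    (mul_lap_continuous hu.contOn hη hsup).integrable_of_hasCompactSupport (mul_lap_compact hc)
  have hle0 : ∫ x, u x * lap ζ x ≤ 0 := by
    by_contra hpos
    push Not at hpos
    set A := ∫ x, u x * lap ζ x
    set B := ∫ x, u x * lap η x with hB_def
    have h1 : ∀ t : ℝ, 0 < t → A + t * B ≤ 0 := by
      intro t ht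
      have := hle t ht
      rwa [integral_add hi1 (hi2.const_mul t), integral_const_mul] at this
    have h2 := h1 (A / (2 * (|B| + 1))) (by positivity)
    have h3 : -(A / 2) ≤ A / (2 * (|B| + 1)) * B := by
      have h5 : A / (2 * (|B| + 1)) * (|B| + 1) = A / 2 := by
        field_simp
      have h6 : 0 < A / (2 * (|B| + 1)) := by positivity
      have h7 := neg_abs_le B
      nlinarith
    linarith
  -- strict positivity
  have hnn : ∀ x, 0 ≤ u x * lap ζ x := by
    intro x
    by_cases hx : x ∈ tsupport ζ
    · by_cases hxB : x ∈ ball z s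
      · rw [hBzero x hxB, zero_mul]
      · apply mul_nonneg (hu.nonneg x (hζs hx))
        rw [hζ_def, rad_lap _ _ _ _ ha zero_le_one]
        rw [mem_ball, dist_eq_norm, not_lt] at hxB
        rw [one_mul, one_mul]
        have h4 : s ^ 2 ≤ ‖x - z‖ ^ 2 := by gcongr
        have h5 : (n:ℝ) * a = s ^ 2 / 4 := by rw [ha_def]; field_simp
        apply lapl_nonneg hp ha (by positivity)
        rw [hp_def]
        nlinarith
    · rw [lap_zero_off hx, mul_zero]
  have hx0c : x₀ ∈ closure (posSet u) := hx₀.1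
  obtain ⟨x₁, hx₁, hd⟩ := Metric.mem_closure_iff.1 hx0c δ hδ
  have hx₁B : s ≤ ‖x₁ - z‖ := by
    by_contra h
    have := hBzero x₁ (by rw [mem_ball, dist_eq_norm]; exact not_le.1 h)
    exact hx₁.2.ne' this
  have hx₁R : ‖x₁ - z‖ < R := by
    rw [← dist_eq_norm]
    calc dist x₁ z ≤ dist x₁ x₀ + dist x₀ z := dist_triangle _ _ _
      _ < δ + s := by
        rw [dist_comm x₁, mem_sphere.1 htouch]; linarith
      _ = R := by rw [hR]; ring
  have hpos : 0 < u x₁ * lap ζ x₁ := by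
    apply mul_pos hx₁.2
    rw [hζ_def, rad_lap _ _ _ _ ha zero_le_one, one_mul, one_mul]
    have h4 : s ^ 2 ≤ ‖x₁ - z‖ ^ 2 := by gcongr
    have h5 : (n:ℝ) * a = s ^ 2 / 4 := by rw [ha_def]; field_simp
    apply lapl_pos hp ha (by positivity)
    · rw [hp_def]
      nlinarith [sq_pos_of_pos hs]
    · rw [hc_def, one_mul]
      apply Real.rpow_lt_rpow_of_neg (by positivity) _ (by linarith)
      gcongr
  have := (mul_lap_continuous hu.contOn hζ hζs).integral_pos_of_hasCompactSupport_nonneg_nonzero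
    (μ := volume) (mul_lap_compact hζc) hnn hpos.ne'
  linarith


/-! ### Coordinates adapted to a direction -/

section coords
variable {m : ℕ}

/-- Coordinates `(t, w)` with respect to the orthonormal basis `b` centred at `y`. -/
def pt (b : OrthonormalBasis (Fin (m+1)) ℝ (EuclideanSpace ℝ (Fin (m+1))))
    (y : EuclideanSpace ℝ (Fin (m+1))) (q : ℝ × (Fin m → ℝ)) : EuclideanSpace ℝ (Fin (m+1)) :=
  y + b.repr.symm (WithLp.toLp 2 (Fin.cons q.1 q.2 : Fin (m+1) → ℝ))

def cT (b : OrthonormalBasis (Fin (m+1)) ℝ (EuclideanSpace ℝ (Fin (m+1))))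
    (y x : EuclideanSpace ℝ (Fin (m+1))) : ℝ := ⟪b 0, x - y⟫

def cW (b : OrthonormalBasis (Fin (m+1)) ℝ (EuclideanSpace ℝ (Fin (m+1))))
    (y x : EuclideanSpace ℝ (Fin (m+1))) : Fin m → ℝ := fun j => ⟪b j.succ, x - y⟫

variable (b : OrthonormalBasis (Fin (m+1)) ℝ (EuclideanSpace ℝ (Fin (m+1))))
    (y : EuclideanSpace ℝ (Fin (m+1)))

lemma cT_pt (q : ℝ × (Fin m → ℝ)) : cT b y (pt b y q) = q.1 := by
  unfold cT pt
  rw [add_sub_cancel_left, ← OrthonormalBasis.repr_apply_apply, LinearIsometryEquiv.apply_symm_apply]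
  simp

lemma cW_pt (q : ℝ × (Fin m → ℝ)) : cW b y (pt b y q) = q.2 := by
  funext j
  unfold cW pt
  rw [add_sub_cancel_left, ← OrthonormalBasis.repr_apply_apply, LinearIsometryEquiv.apply_symm_apply]
  simp

lemma norm_sq_coords (x : EuclideanSpace ℝ (Fin (m+1))) :
    ‖x - y‖ ^ 2 = cT b y x ^ 2 + ∑ j, cW b y x j ^ 2 := by
  have h := b.sum_sq_norm_inner_right (x - y)
  rw [Fin.sum_univ_succ] at h
  simp only [Real.norm_eq_abs, sq_abs] at h
  exact h.symm

lemma norm_sq_pt (q : ℝ × (Fin m → ℝ)) : ‖pt b y q - y‖ ^ 2 = q.1 ^ 2 + ∑ j, q.2 j ^ 2 := by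
  rw [norm_sq_coords b y, cT_pt, cW_pt]

lemma pt_line (t : ℝ) (w : Fin m → ℝ) : pt b y (t, w) = pt b y (0, w) + t • b 0 := by
  unfold pt
  rw [← OrthonormalBasis.sum_repr_symm, ← OrthonormalBasis.sum_repr_symm, Fin.sum_univ_succ,
    Fin.sum_univ_succ]
  simp
  abel

lemma cW_lipschitz : LipschitzWith 1 (cW b y) := by
  apply LipschitzWith.of_dist_le_mul
  intro x x'
  rw [NNReal.coe_one, one_mul, dist_pi_le_iff dist_nonneg]
  intro j
  unfold cW
  rw [Real.dist_eq, ← inner_sub_right, dist_eq_norm]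
  have := abs_real_inner_le_norm (b j.succ) (x - y - (x' - y))
  rw [b.norm_eq_one, one_mul] at this
  simpa using this

lemma cT_lipschitz : LipschitzWith 1 (cT b y) := by
  apply LipschitzWith.of_dist_le_mul
  intro x x'
  rw [NNReal.coe_one, one_mul]
  unfold cT
  rw [Real.dist_eq, ← inner_sub_right, dist_eq_norm]
  have := abs_real_inner_le_norm (b 0) (x - y - (x' - y))
  rw [b.norm_eq_one, one_mul] at this
  simpa using this

/-- the coordinate map as a measurable equivalence -/
def ptEquiv : (ℝ × (Fin m → ℝ)) ≃ᵐ EuclideanSpace ℝ (Fin (m+1)) :=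
  ((MeasurableEquiv.piFinSuccAbove (fun _ : Fin (m+1) => ℝ) 0).symm.trans
    (MeasurableEquiv.toLp 2 (Fin (m+1) → ℝ))).trans
    (b.repr.symm.toHomeomorph.toMeasurableEquiv.trans (Homeomorph.addLeft y).toMeasurableEquiv)

lemma ptEquiv_apply (q : ℝ × (Fin m → ℝ)) : ptEquiv b y q = pt b y q := by
  have : (MeasurableEquiv.piFinSuccAbove (fun _ : Fin (m+1) => ℝ) 0).symm q =
      (Fin.cons q.1 q.2 : Fin (m+1) → ℝ) := by
    exact Fin.insertNth_zero' _ _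
  unfold pt
  rw [← this]
  rfl

lemma pt_measurePreserving : MeasurePreserving (ptEquiv b y) volume volume := by
  have h1 := (volume_preserving_piFinSuccAbove (fun _ : Fin (m+1) => ℝ) 0).symm
  have h2 := PiLp.volume_preserving_toLp (Fin (m+1))
  have h3 := b.measurePreserving_repr_symm
  have h4 := measurePreserving_add_left (volume : Measure (EuclideanSpace ℝ (Fin (m+1)))) y
  exact h4.comp (h3.comp (h2.comp h1))

lemma integral_coords (F : EuclideanSpace ℝ (Fin (m+1)) → ℝ) :
    ∫ x, F x = ∫ q, F (pt b y q) := by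
  simp_rw [← ptEquiv_apply]
  exact ((pt_measurePreserving b y).integral_comp' F).symm

lemma integrable_coords {F : EuclideanSpace ℝ (Fin (m+1)) → ℝ} (hF : Integrable F) :
    Integrable (fun q => F (pt b y q)) := by
  simp_rw [← ptEquiv_apply]
  exact (pt_measurePreserving b y).integrable_comp_emb (ptEquiv b y).measurableEmbedding |>.2 hF

lemma sum_inner_fderiv {η : EuclideanSpace ℝ (Fin (m+1)) → ℝ} (x v : EuclideanSpace ℝ (Fin (m+1))) :
    ∑ i : Fin (m+1), ⟪v, (EuclideanSpace.single i 1 : EuclideanSpace ℝ (Fin (m+1)))⟫ *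
      fderiv ℝ η x (EuclideanSpace.single i 1) = fderiv ℝ η x v := by
  have : v = ∑ i : Fin (m+1), ⟪v, (EuclideanSpace.single i 1 : EuclideanSpace ℝ (Fin (m+1)))⟫ •
      (EuclideanSpace.single i 1 : EuclideanSpace ℝ (Fin (m+1))) := by
    have := (EuclideanSpace.basisFun (Fin (m+1)) ℝ).sum_repr v
    conv_lhs => rw [← this]
    simp [EuclideanSpace.inner_single_right]
  conv_rhs => rw [this]
  simp only [map_sum, map_smul, smul_eq_mul]

/-- `∫ (τ + T)₊ Δη` is the integral of `η` over the hyperplane `T = -τ`. -/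
lemma plane_integral {η : EuclideanSpace ℝ (Fin (m+1)) → ℝ} (hη : ContDiff ℝ (⊤ : ℕ∞) η)
    (hc : HasCompactSupport η) (τ : ℝ) :
    ∫ x, max (τ + cT b y x) 0 * lap η x = ∫ w : Fin m → ℝ, η (pt b y (-τ, w)) := by
  have hU : LipschitzWith 1 (fun x => max (τ + cT b y x) 0) := by
    have : LipschitzWith 1 (fun x => τ + cT b y x) := by
      simpa using (LipschitzWith.const τ).add (cT_lipschitz b y)
    exact this.max_const 0
  have hcTf : ∀ x, HasFDerivAt (fun x => τ + cT b y x)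
      (innerSL ℝ (b 0)) x := by
    intro x
    have := ((innerSL ℝ (b 0)).hasFDerivAt (x := x - y)).comp x ((hasFDerivAt_id x).sub_const y)
    exact this.const_add τ
  rw [ibp hU hη hc]
  set S : Set (EuclideanSpace ℝ (Fin (m+1))) := {x | 0 < τ + cT b y x} with hS
  have hSo : IsOpen S :=
    isOpen_lt continuous_const (continuous_const.add (cT_lipschitz b y).continuous)
  have h1 : ∫ x, ∑ i : Fin (m+1), lineDeriv ℝ (fun x => max (τ + cT b y x) 0) x
      (EuclideanSpace.single i 1) * fderiv ℝ η x (EuclideanSpace.single i 1) =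
      ∫ x, S.indicator (fun x => fderiv ℝ η x (b 0)) x := by
    apply integral_congr_ae
    filter_upwards [hU.ae_differentiableAt (μ := volume)] with x hx
    simp_rw [hx.lineDeriv_eq_fderiv]
    by_cases hxS : x ∈ S
    · rw [indicator_of_mem hxS, ← sum_inner_fderiv]
      refine Finset.sum_congr rfl fun i _ => ?_
      have : (fun x => max (τ + cT b y x) 0) =ᶠ[𝓝 x] fun x => τ + cT b y x := by
        filter_upwards [hSo.mem_nhds hxS] with x' hx'
        exact max_eq_left (le_of_lt hx')
      rw [this.fderiv_eq, (hcTf x).fderiv]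
      simp
    · rw [indicator_of_notMem hxS]
      have : IsLocalMin (fun x => max (τ + cT b y x) 0) x := by
        refine .of_forall fun x' => ?_
        have : τ + cT b y x ≤ 0 := not_lt.1 hxS
        simp only [max_eq_right this]
        exact le_max_right _ _
      rw [this.fderiv_eq_zero]
      simp
  have hInt : Integrable (S.indicator (fun x => fderiv ℝ η x (b 0))) :=
    ((fderiv_apply_contDiff hη (b 0)).continuous.integrable_of_hasCompactSupport
      (fderiv_apply_compact hc (b 0))).indicator hSo.measurableSet
  rw [h1, integral_coords b y]
  have hInt' := integrable_coords b y hInt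
  rw [Measure.volume_eq_prod] at hInt' ⊢
  rw [integral_prod_symm _ hInt', ← integral_neg]
  congr 1
  funext w
  set φ : ℝ → ℝ := fun t => η (pt b y (t, w)) with hφ
  have hpl : (fun t : ℝ => pt b y (t, w)) = fun t => pt b y (0, w) + t • b 0 :=
    funext fun t => pt_line b y t w
  have hl : ∀ t, HasDerivAt (fun t : ℝ => pt b y (t, w)) (b 0) t := by
    intro t
    rw [hpl]
    simpa using ((hasDerivAt_id t).smul_const (b 0)).const_add (pt b y (0, w))
  have hφd : ∀ t, deriv φ t = fderiv ℝ η (pt b y (t, w)) (b 0) := by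
    intro t
    exact ((hη.differentiable (by simp) _).hasFDerivAt.comp_hasDerivAt t (hl t)).deriv
  have hφ1 : ContDiff ℝ 1 φ := by
    have : ContDiff ℝ (⊤ : ℕ∞) φ := by
      have h := hη.comp (contDiff_const.add (contDiff_id.smul contDiff_const) :
        ContDiff ℝ (⊤ : ℕ∞) (fun t : ℝ => pt b y (0, w) + t • b 0))
      rw [← hpl] at h
      exact h
    exact this.of_le (by norm_cast)
  have hφc : HasCompactSupport φ := by
    apply hc.comp_isClosedEmbedding
    apply Isometry.isClosedEmbedding
    apply Isometry.of_dist_eq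
    intro t t'
    rw [pt_line b y t, pt_line b y t', dist_add_left, dist_eq_norm, ← sub_smul, norm_smul,
      b.norm_eq_one, mul_one, Real.dist_eq, Real.norm_eq_abs]
  have h5 := hφc.integral_Ioi_deriv_eq hφ1 (-τ)
  have h6 : ∫ t, S.indicator (fun x => fderiv ℝ η x (b 0)) (pt b y (t, w)) =
      ∫ t in Ioi (-τ), deriv φ t := by
    rw [← integral_indicator measurableSet_Ioi]
    congr 1
    funext t
    have hiff : pt b y (t, w) ∈ S ↔ t ∈ Ioi (-τ) := by
      rw [hS, mem_ofPred_eq, cT_pt, mem_Ioi]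
      constructor <;> intro h <;> simp at * <;> linarith
    by_cases ht : t ∈ Ioi (-τ)
    · rw [indicator_of_mem ht, indicator_of_mem (hiff.2 ht), hφd]
    · rw [indicator_of_notMem ht, indicator_of_notMem (fun h => ht (hiff.1 h))]
  rw [h6, h5, neg_neg]

end coords


/-! ### Projection of the free boundary -/

lemma gamma_lower {m : ℕ} (b : OrthonormalBasis (Fin (m+1)) ℝ (EuclideanSpace ℝ (Fin (m+1))))
    (y : EuclideanSpace ℝ (Fin (m+1))) {Γ : Set (EuclideanSpace ℝ (Fin (m+1)))}
    (hΓ : MeasurableSet Γ) {g : (Fin m → ℝ) → ℝ} (hg : Continuous g) (hg0 : ∀ w, 0 ≤ g w)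
    {η : EuclideanSpace ℝ (Fin (m+1)) → ℝ} (hη0 : ∀ x, 0 ≤ η x)
    (hη : IntegrableOn η Γ (μH[(m:ℝ)])) (C : ℝ)
    (hcross : ∀ w, 0 < g w → ∃ x ∈ Γ, |cT b y x| ≤ C ∧ cW b y x = w)
    (hdom : ∀ x ∈ Γ, |cT b y x| ≤ C → g (cW b y x) ≤ η x) :
    ∫ w, g w ≤ ∫ x in Γ, η x ∂(μH[(m:ℝ)]) := by
  set S : Set (EuclideanSpace ℝ (Fin (m+1))) := Γ ∩ {x | |cT b y x| ≤ C} with hS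
  have hSm : MeasurableSet S :=
    hΓ.inter (isClosed_le (cT_lipschitz b y).continuous.abs continuous_const).measurableSet
  have hWm : Measurable (cW b y) := (cW_lipschitz b y).continuous.measurable
  have hPm : MeasurableSet {w | 0 < g w} := (isOpen_lt continuous_const hg).measurableSet
  have hmeas : (volume : Measure (Fin m → ℝ)).restrict {w | 0 < g w} ≤
      ((μH[(m:ℝ)]).restrict S).map (cW b y) := by
    rw [Measure.le_iff]
    intro A hA
    rw [Measure.restrict_apply hA, Measure.map_apply hWm hA, Measure.restrict_apply (hWm hA)]
    have h1 : A ∩ {w | 0 < g w} ⊆ cW b y '' (cW b y ⁻¹' A ∩ S) := by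
      rintro w ⟨hwA, hwg⟩
      obtain ⟨x, hxΓ, hxT, hxW⟩ := hcross w hwg
      exact ⟨x, ⟨by rw [mem_preimage, hxW]; exact hwA, hxΓ, hxT⟩, hxW⟩
    have h2 := (cW_lipschitz b y).hausdorffMeasure_image_le (d := (m:ℝ)) (by positivity)
      (cW b y ⁻¹' A ∩ S)
    have h3 : (μH[(m:ℝ)] : Measure (Fin m → ℝ)) = volume := by
      have := hausdorffMeasure_pi_real (ι := Fin m)
      rwa [Fintype.card_fin] at this
    rw [h3] at h2
    calc volume (A ∩ {w | 0 < g w}) ≤ volume (cW b y '' (cW b y ⁻¹' A ∩ S)) := measure_mono h1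
      _ ≤ _ := h2
      _ = _ := by simp
  have hlin : ∫⁻ w, ENNReal.ofReal (g w) ≤ ∫⁻ x in Γ, ENNReal.ofReal (η x) ∂(μH[(m:ℝ)]) := by
    calc ∫⁻ w, ENNReal.ofReal (g w)
        = ∫⁻ w in {w | 0 < g w}, ENNReal.ofReal (g w) := by
          rw [← lintegral_indicator hPm]
          congr 1
          funext w
          by_cases hw : w ∈ {w | 0 < g w}
          · rw [indicator_of_mem hw]
          · rw [indicator_of_notMem hw]
            exact ENNReal.ofReal_of_nonpos (not_lt.1 hw)
      _ ≤ ∫⁻ w, ENNReal.ofReal (g w) ∂(((μH[(m:ℝ)]).restrict S).map (cW b y)) :=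
          lintegral_mono' hmeas le_rfl
      _ = ∫⁻ x in S, ENNReal.ofReal (g (cW b y x)) ∂(μH[(m:ℝ)]) :=
          lintegral_map hg.measurable.ennreal_ofReal hWm
      _ ≤ ∫⁻ x in S, ENNReal.ofReal (η x) ∂(μH[(m:ℝ)]) := by
          apply setLIntegral_mono' hSm
          intro x hx
          exact ENNReal.ofReal_le_ofReal (hdom x hx.1 hx.2)
      _ ≤ _ := lintegral_mono_set inter_subset_left
  rw [integral_eq_lintegral_of_nonneg_ae (.of_forall hg0) hg.aestronglyMeasurable,
    integral_eq_lintegral_of_nonneg_ae (.of_forall hη0) hη.aestronglyMeasurable]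
  apply ENNReal.toReal_mono _ hlin
  have := hη.2
  rw [hasFiniteIntegral_iff_ofReal (.of_forall hη0)] at this
  exact this.ne

/-- crossing: on a segment from a zero point in `B₁` to a positive point there is a free boundary
point. -/
lemma exists_crossing {u : EuclideanSpace ℝ (Fin n) → ℝ} (γ : ℝ → EuclideanSpace ℝ (Fin n))
    (hγ : Continuous γ) {t₀ t₁ : ℝ} (h01 : t₀ ≤ t₁) (h0 : γ t₀ ∉ posSet u) (h1 : γ t₁ ∈ posSet u) :
    ∃ t ∈ Icc t₀ t₁, γ t ∈ frontier (posSet u) := by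
  by_contra hno
  push Not at hno
  have hpre : IsPreconnected (γ '' Icc t₀ t₁) := isPreconnected_Icc.image γ hγ.continuousOn
  have hcl : ∀ t ∈ Icc t₀ t₁, γ t ∈ closure (posSet u) → γ t ∈ interior (posSet u) := by
    intro t ht h
    by_contra h'
    exact hno t ht ⟨h, h'⟩
  have := hpre (interior (posSet u)) (closure (posSet u))ᶜ isOpen_interior
    isClosed_closure.isOpen_compl
    (by
      rintro x ⟨t, ht, rfl⟩
      by_cases h : γ t ∈ closure (posSet u)
      · exact Or.inl (hcl t ht h)
      · exact Or.inr h)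
    ⟨γ t₁, ⟨t₁, right_mem_Icc.2 h01, rfl⟩, hcl t₁ (right_mem_Icc.2 h01) (subset_closure h1)⟩
    ⟨γ t₀, ⟨t₀, left_mem_Icc.2 h01, rfl⟩, fun h =>
      h0 (interior_subset (hcl t₀ (left_mem_Icc.2 h01) h))⟩
  obtain ⟨x, _, hx1, hx2⟩ := this
  exact hx2 (interior_subset_closure hx1)


/-! ### One-scale estimates -/

lemma infDist_ball_le {E : Type*} [NormedAddCommGroup E] [NormedSpace ℝ E] (x z : E) {s : ℝ}
    (hs : 0 < s) : Metric.infDist x (ball z s) ≤ max (‖x - z‖ - s) 0 := by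
  rcases lt_or_ge ‖x - z‖ s with h | h
  · have : x ∈ ball z s := by rwa [mem_ball, dist_eq_norm]
    rw [Metric.infDist_zero_of_mem this]
    exact le_max_right _ _
  · have hpos : 0 < ‖x - z‖ := lt_of_lt_of_le hs h
    rw [← Metric.infDist_closure, closure_ball z hs.ne']
    have hmem : z + (s / ‖x - z‖) • (x - z) ∈ closedBall z s := by
      rw [mem_closedBall, dist_eq_norm, add_sub_cancel_left, norm_smul, Real.norm_eq_abs,
        abs_of_pos (by positivity), div_mul_cancel₀ _ hpos.ne']
    refine (Metric.infDist_le_dist_of_mem hmem).trans (le_trans (le_of_eq ?_) (le_max_left _ _))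
    have : x - (z + (s / ‖x - z‖) • (x - z)) = (1 - s / ‖x - z‖) • (x - z) := by
      rw [sub_smul, one_smul]; abel
    have h1 : s / ‖x - z‖ ≤ 1 := by rw [div_le_one hpos]; exact h
    rw [dist_eq_norm, this, norm_smul, Real.norm_eq_abs, abs_of_nonneg (by linarith)]
    field_simp

section OneScale

variable {m : ℕ} (b : OrthonormalBasis (Fin (m+1)) ℝ (EuclideanSpace ℝ (Fin (m+1))))
  {y z : EuclideanSpace ℝ (Fin (m+1))} {s h σ : ℝ}

lemma norm_sq_z (hy : y = z + (s + h) • b 0) (x : EuclideanSpace ℝ (Fin (m+1))) :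
    ‖x - z‖ ^ 2 = (s + h + cT b y x) ^ 2 + ∑ j, cW b y x j ^ 2 := by
  have h1 : x - z = (x - y) + (s + h) • b 0 := by rw [hy]; abel
  have h2 : ‖b 0‖ = 1 := b.orthonormal.1 0
  have h3 := norm_sq_coords b y x
  rw [h1, norm_add_sq_real, inner_smul_right, norm_smul, h2, mul_one, Real.norm_eq_abs, sq_abs, h3,
    real_inner_comm]
  unfold cT
  ring

lemma abs_cT_le (x : EuclideanSpace ℝ (Fin (m+1))) : |cT b y x| ≤ ‖x - y‖ := by
  have h3 := norm_sq_coords b y x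
  have : 0 ≤ ∑ j, cW b y x j ^ 2 := by positivity
  exact abs_le_of_sq_le_sq (by linarith) (norm_nonneg _)

lemma geomD (hy : y = z + (s + h) • b 0) (hh : 0 < h) (hσ : 0 < σ) (hσ1 : σ ≤ 1)
    (hhs : 4 * h ≤ s * σ) {x : EuclideanSpace ℝ (Fin (m+1))} (hx : ‖x - y‖ ≤ 2 * h) :
    max (‖x - z‖ - s) 0 ≤ max (h * (1 + σ) + cT b y x) 0 := by
  have hs : 0 < s := by
    by_contra hs
    push Not at hs
    nlinarith
  have hhs' : 4 * h ≤ s := by nlinarith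
  apply max_le _ (le_max_right _ _)
  set M := max (h * (1 + σ) + cT b y x) 0 with hM
  have hM1 : h * (1 + σ) + cT b y x ≤ M := le_max_left _ _
  have hM0 : 0 ≤ M := le_max_right _ _
  have ht := (abs_le.1 (abs_cT_le b (y := y) x))
  have h1 := norm_sq_z b hy x
  have h2 := norm_sq_coords b y x
  have h4 : ‖x - y‖ ^ 2 ≤ 4 * h ^ 2 := by nlinarith [norm_nonneg (x - y)]
  have h5 : (s + h + cT b y x) ^ 2 + 4 * h ^ 2 ≤ (s + M) ^ 2 := by
    have h6 : 0 ≤ s + h + cT b y x := by linarith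
    have h7 : (s + h + cT b y x + h * σ) ^ 2 ≤ (s + M) ^ 2 := by
      apply pow_le_pow_left₀ (by positivity); linarith
    have h8 : 2 * h ≤ σ * (s - h) := by nlinarith
    have h9 : 2 * h ≤ σ * (s + h + cT b y x) := by nlinarith
    have h10 := mul_le_mul_of_nonneg_left h9 hh.le
    nlinarith [sq_nonneg (h * σ)]
  have : ‖x - z‖ ≤ s + M := by
    refine le_of_abs_le (abs_le_of_sq_le_sq ?_ (by linarith))
    nlinarith [sq_nonneg (cT b y x)]
  linarith

end OneScale


/-! ### The barrier -/

def pp (m : ℕ) : ℝ := ((m:ℝ) + 1) / 2 - 3 / 4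

lemma pp_pos {m : ℕ} (hm : 1 ≤ m) : 0 < pp m := by
  have : (1:ℝ) ≤ m := by exact_mod_cast hm
  unfold pp; linarith

def bar (m : ℕ) (τ θ h : ℝ) (y x : EuclideanSpace ℝ (Fin (m+1))) : ℝ :=
  rad (pp m) (θ ^ 4) ((1 + 2 * τ) ^ (-(pp m))) (h⁻¹ ^ 2) y x

section Bar

variable {m : ℕ} {τ θ h : ℝ}

lemma bar_contDiff (hθ : 0 < θ) (y : EuclideanSpace ℝ (Fin (m+1))) :
    ContDiff ℝ (⊤ : ℕ∞) (bar m τ θ h y) :=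
  rad_contDiff _ _ _ _ (by positivity) (by positivity) y

lemma bar_nonneg (y x : EuclideanSpace ℝ (Fin (m+1))) : 0 ≤ bar m τ θ h y x :=
  rad_nonneg _ _ _ _ _ _

lemma bar_aux (hm : 1 ≤ m) (hτ : 0 < τ) (hτ1 : τ ≤ 1) (hθ : 0 < θ) (hh : 0 < h) :
    (h⁻¹ ^ 2 * (2 * h) ^ 2 + θ ^ 4) ^ (-(pp m)) ≤ (1 + 2 * τ) ^ (-(pp m)) := by
  have : h⁻¹ ^ 2 * (2 * h) ^ 2 = 4 := by field_simp; norm_num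
  rw [this]
  apply Real.rpow_le_rpow_of_nonpos (by linarith) _ (by linarith [pp_pos hm])
  have : 0 < θ ^ 4 := by positivity
  linarith

lemma bar_tsupport (hm : 1 ≤ m) (hτ : 0 < τ) (hτ1 : τ ≤ 1) (hθ : 0 < θ) (hh : 0 < h)
    (y : EuclideanSpace ℝ (Fin (m+1))) : tsupport (bar m τ θ h y) ⊆ closedBall y (2 * h) :=
  rad_tsupport (pp_pos hm) (by positivity) (by positivity) (by positivity)
    (bar_aux hm hτ hτ1 hθ hh) y

lemma bar_compact (hm : 1 ≤ m) (hτ : 0 < τ) (hτ1 : τ ≤ 1) (hθ : 0 < θ) (hh : 0 < h)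
    (y : EuclideanSpace ℝ (Fin (m+1))) : HasCompactSupport (bar m τ θ h y) :=
  rad_compact (pp_pos hm) (by positivity) (by positivity) (by positivity)
    (bar_aux hm hτ hτ1 hθ hh) y

lemma bar_lap_lower (hm : 1 ≤ m) (hθ : 0 < θ) (y x : EuclideanSpace ℝ (Fin (m+1))) :
    -(h⁻¹ ^ 2 * (2 * ((m:ℝ)+1) * pp m * (θ ^ (2 * m + 3))⁻¹)) ≤ lap (bar m τ θ h y) x := by
  have e : lap (bar m τ θ h y) x = _ := rad_lap (pp m) (θ ^ 4) ((1 + 2 * τ) ^ (-(pp m))) (h⁻¹ ^ 2)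
    (by positivity) (by positivity) x y
  have h1 := lapl_lower (p := pp m) (a := θ ^ 4) (c := (1 + 2 * τ) ^ (-(pp m)))
    (t := h⁻¹ ^ 2 * ‖x - y‖ ^ 2) (d := ((m + 1 : ℕ) : ℝ)) (pp_pos hm) (by positivity)
    (by positivity) (by positivity)
  have h2 : (θ ^ 4) ^ (-pp m - 1) = (θ ^ (2 * m + 3))⁻¹ := by
    rw [← Real.rpow_natCast θ 4, ← Real.rpow_natCast θ (2 * m + 3), ← Real.rpow_neg hθ.le,
      ← Real.rpow_mul hθ.le]
    congr 1
    unfold pp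
    push_cast
    ring
  rw [h2] at h1
  push_cast at h1 e
  rw [e, ← mul_neg]
  exact mul_le_mul_of_nonneg_left h1 (by positivity)

lemma bar_lap_nonneg (hm : 1 ≤ m) (hθ : 0 < θ) (hh : 0 < h) (y x : EuclideanSpace ℝ (Fin (m+1)))
    (hx : 2 * ((m:ℝ) + 1) * θ ^ 2 * h ≤ ‖x - y‖) :
    0 ≤ lap (bar m τ θ h y) x := by
  have e : lap (bar m τ θ h y) x = _ := rad_lap (pp m) (θ ^ 4) ((1 + 2 * τ) ^ (-(pp m))) (h⁻¹ ^ 2)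
    (by positivity) (by positivity) x y
  rw [e]
  refine mul_nonneg (by positivity)
    (lapl_nonneg (pp_pos hm) (by positivity) (by positivity) ?_)
  have h1 : (2 * ((m:ℝ) + 1) * θ ^ 2) ≤ h⁻¹ * ‖x - y‖ := by
    rw [inv_mul_eq_div, le_div_iff₀ hh]; exact hx
  have h2 := pow_le_pow_left₀ (by positivity) h1 2
  rw [mul_pow h⁻¹] at h2
  have hm' : (0:ℝ) ≤ m := by positivity
  have h3 : ((m:ℝ) + 1) * θ ^ 4 ≤ ((m:ℝ) + 1) ^ 2 * θ ^ 4 := by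
    gcongr; nlinarith
  unfold pp
  push_cast
  nlinarith

end Bar


/-! ### Upper bound for `∫ u Δη` -/

def CC1 (m : ℕ) (ℓ L : ℝ) : ℝ :=
  2 + (ℓ + 1) * (1 + 2 * ((m:ℝ) + 1)) + L * (2 * ((m:ℝ) + 1))

def CC2 (m : ℕ) (ℓ L : ℝ) : ℝ :=
  CC1 m ℓ L * (2 * ((m:ℝ)+1) * pp m) * (2 * ((m:ℝ) + 1)) ^ (m + 1) *
    (volume : Measure (EuclideanSpace ℝ (Fin (m+1)))).real (ball 0 1)

lemma upper_est {m : ℕ} (b : OrthonormalBasis (Fin (m+1)) ℝ (EuclideanSpace ℝ (Fin (m+1))))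
    {y z : EuclideanSpace ℝ (Fin (m+1))} {s h τ θ ℓ L : ℝ} {u : EuclideanSpace ℝ (Fin (m+1)) → ℝ}
    (hm : 1 ≤ m) (hτ : 0 < τ) (hτ1 : τ ≤ 1) (hθ : 0 < θ) (hθ1 : θ ≤ 1) (hh : 0 < h)
    (hℓ : 0 ≤ ℓ) (hL : 0 ≤ L) (hy : y = z + (s + h) • b 0) (hhs : 4 * h ≤ s * θ ^ 2)
    (hball : closedBall y (2 * h) ⊆ ball 0 1) (hu : ContinuousOn u (ball 0 1))
    (hup : ∀ x ∈ closedBall y (2 * h), u x ≤ (ℓ + θ ^ 2) * max (‖x - z‖ - s) 0)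
    (hyl : (ℓ - θ ^ 2) * h ≤ u y)
    (hLip : ∀ x ∈ closedBall y (2 * h), u y - L * ‖x - y‖ ≤ u x) :
    ∫ x, u x * lap (bar m τ θ h y) x ≤
      (ℓ + θ ^ 2) * (∫ w, bar m τ θ h y (pt b y (-(h * (1 + θ ^ 2)), w))) + CC2 m ℓ L * θ * h ^ m := by
  have hηs := bar_contDiff (m := m) (τ := τ) (h := h) hθ y
  have hηc := bar_compact hm hτ hτ1 hθ hh y
  have hηt := bar_tsupport hm hτ hτ1 hθ hh y
  have hσ1 : θ ^ 2 ≤ 1 := pow_le_one₀ hθ.le hθ1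
  have hσ0 : 0 < θ ^ 2 := by positivity
  have hp := pp_pos hm
  set κ : ℝ := 2 * ((m:ℝ) + 1) with hκ
  have hκ0 : 0 < κ := by positivity
  have hC1 : 0 ≤ CC1 m ℓ L := by unfold CC1; positivity
  set N : ℝ := h⁻¹ ^ 2 * (2 * ((m:ℝ)+1) * pp m * (θ ^ (2 * m + 3))⁻¹) with hN
  have hN0 : 0 ≤ N := by positivity
  set E : ℝ := CC1 m ℓ L * θ ^ 2 * h * N with hE
  have hE0 : 0 ≤ E := by positivity
  set M : EuclideanSpace ℝ (Fin (m+1)) → ℝ := fun x => max (h * (1 + θ ^ 2) + cT b y x) 0 with hM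
  have hMc : Continuous M :=
    (continuous_const.add (cT_lipschitz b y).continuous).max continuous_const
  have hpw : ∀ x, u x * lap (bar m τ θ h y) x ≤
      (ℓ + θ ^ 2) * (M x * lap (bar m τ θ h y) x) +
        (ball y (κ * θ ^ 2 * h)).indicator (fun _ => E) x := by
    intro x
    have hind : 0 ≤ (ball y (κ * θ ^ 2 * h)).indicator (fun _ => E) x :=
      indicator_nonneg (fun _ _ => hE0) x
    by_cases hx : x ∈ closedBall y (2 * h)
    · have hx' : ‖x - y‖ ≤ 2 * h := by rwa [mem_closedBall, dist_eq_norm] at hx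
      have hD : max (‖x - z‖ - s) 0 ≤ M x := geomD b hy hh hσ0 hσ1 hhs hx'
      have hu1 : u x ≤ (ℓ + θ ^ 2) * M x :=
        (hup x hx).trans (mul_le_mul_of_nonneg_left hD (by positivity))
      rcases le_or_gt 0 (lap (bar m τ θ h y) x) with hl | hl
      · have := mul_le_mul_of_nonneg_right hu1 hl
        nlinarith
      · have hxs : ‖x - y‖ < κ * θ ^ 2 * h := by
          by_contra hc
          exact absurd (bar_lap_nonneg hm hθ hh y x (not_lt.1 hc)) (not_le.2 hl)
        have hmem : x ∈ ball y (κ * θ ^ 2 * h) := by rwa [mem_ball, dist_eq_norm]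
        rw [indicator_of_mem hmem]
        have hlow := bar_lap_lower (τ := τ) (h := h) hm hθ y x
        rw [← hN] at hlow
        have hMx : M x ≤ h * (1 + θ ^ 2) + κ * θ ^ 2 * h := by
          apply max_le _ (by positivity)
          have := (abs_le.1 (abs_cT_le b (y := y) x)).2
          linarith
        have hux : (ℓ - θ ^ 2) * h - L * (κ * θ ^ 2 * h) ≤ u x := by
          have h1 := hLip x hx
          have h2 := mul_le_mul_of_nonneg_left hxs.le hL
          linarith
        have hdiff : (ℓ + θ ^ 2) * M x - u x ≤ CC1 m ℓ L * θ ^ 2 * h := by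
          have h1 : (ℓ + θ ^ 2) * M x ≤ (ℓ + θ ^ 2) * (h * (1 + θ ^ 2) + κ * θ ^ 2 * h) :=
            mul_le_mul_of_nonneg_left hMx (by positivity)
          have h2 : (ℓ + θ ^ 2) * ((1 + κ) * (θ ^ 2 * h)) ≤ (ℓ + 1) * ((1 + κ) * (θ ^ 2 * h)) := by
            gcongr
          unfold CC1
          rw [← hκ]
          nlinarith
        have hd0 : 0 ≤ (ℓ + θ ^ 2) * M x - u x := by linarith
        have : ((ℓ + θ ^ 2) * M x - u x) * (-lap (bar m τ θ h y) x) ≤ E := by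
          rw [hE]
          exact mul_le_mul hdiff (by linarith) (by linarith) (by positivity)
        nlinarith
    · have : lap (bar m τ θ h y) x = 0 := lap_zero_off (fun hh => hx (hηt hh))
      rw [this]
      simpa using hind
  have hi1 : Integrable (fun x => u x * lap (bar m τ θ h y) x) :=
    (mul_lap_continuous hu hηs (hηt.trans hball)).integrable_of_hasCompactSupport
      (mul_lap_compact hηc)
  have hi2 : Integrable (fun x => M x * lap (bar m τ θ h y) x) :=
    (mul_lap_continuous hMc.continuousOn hηs (hηt.trans hball)).integrable_of_hasCompactSupport
      (mul_lap_compact hηc)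
  have hi3 : Integrable ((ball y (κ * θ ^ 2 * h)).indicator (fun _ => E)) := by
    rw [integrable_indicator_iff measurableSet_ball]
    exact integrableOn_const measure_ball_lt_top.ne
  have hvol : (volume : Measure (EuclideanSpace ℝ (Fin (m+1)))).real (ball y (κ * θ ^ 2 * h)) =
      (κ * θ ^ 2 * h) ^ (m + 1) *
        (volume : Measure (EuclideanSpace ℝ (Fin (m+1)))).real (ball 0 1) := by
    rw [Measure.real, Measure.addHaar_ball _ _ (by positivity), ENNReal.toReal_mul,
      ENNReal.toReal_ofReal (by positivity)]
    simp [Measure.real]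
  calc ∫ x, u x * lap (bar m τ θ h y) x
      ≤ ∫ x, ((ℓ + θ ^ 2) * (M x * lap (bar m τ θ h y) x) +
        (ball y (κ * θ ^ 2 * h)).indicator (fun _ => E) x) :=
        integral_mono hi1 ((hi2.const_mul _).add hi3) hpw
    _ = (ℓ + θ ^ 2) * (∫ x, M x * lap (bar m τ θ h y) x) +
        (κ * θ ^ 2 * h) ^ (m + 1) *
        (volume : Measure (EuclideanSpace ℝ (Fin (m+1)))).real (ball 0 1) * E := by
        rw [integral_add (hi2.const_mul _) hi3, integral_const_mul,
          integral_indicator measurableSet_ball, setIntegral_const, hvol, smul_eq_mul]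
    _ = _ := by
        rw [plane_integral b y hηs hηc]
        congr 1
        rw [hE, hN]
        unfold CC2
        rw [← hκ]
        have e1 : θ ^ (2 * m + 3) = (θ ^ (m+1)) ^ 2 * θ := by ring
        rw [e1, mul_pow, mul_pow, ← pow_mul, mul_comm 2 (m+1), pow_mul, pow_succ h m]
        have : θ ^ (m + 1) ≠ 0 := by positivity
        field_simp


/-! ### Lower bound for the free boundary integral -/

lemma bar_pt {m : ℕ} (b : OrthonormalBasis (Fin (m+1)) ℝ (EuclideanSpace ℝ (Fin (m+1))))
    (y : EuclideanSpace ℝ (Fin (m+1))) (τ θ h t : ℝ) (w : Fin m → ℝ) :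
    bar m τ θ h y (pt b y (t, w)) =
      psi (pp m) (θ ^ 4) ((1 + 2 * τ) ^ (-(pp m))) (h⁻¹ ^ 2 * (t ^ 2 + ∑ j, w j ^ 2)) := by
  unfold bar rad
  rw [norm_sq_pt]

lemma psi_pos_lt {p a c t : ℝ} (hp : 0 < p) (hc : 0 < c)
    (h : 0 < psi p a (c ^ (-p)) t) : t + a < c := by
  by_contra hcon
  push Not at hcon
  have := Real.rpow_le_rpow_of_nonpos (z := -p) hc hcon (by linarith)
  unfold psi at h
  rw [chi_of_nonpos (by linarith)] at h
  exact lt_irrefl _ h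

lemma pt_continuous {m : ℕ} (b : OrthonormalBasis (Fin (m+1)) ℝ (EuclideanSpace ℝ (Fin (m+1))))
    (y : EuclideanSpace ℝ (Fin (m+1))) : Continuous (pt b y) := by
  unfold pt
  refine continuous_const.add (b.repr.symm.continuous.comp ?_)
  refine (PiLp.continuous_toLp 2 _).comp ?_
  refine continuous_pi fun i => ?_
  refine Fin.cases ?_ (fun j => ?_) i
  · simpa using continuous_fst
  · exact (continuous_apply j).comp continuous_snd

set_option maxHeartbeats 800000 in
lemma lower_est {m : ℕ} (b : OrthonormalBasis (Fin (m+1)) ℝ (EuclideanSpace ℝ (Fin (m+1))))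
    {x₀ y z : EuclideanSpace ℝ (Fin (m+1))} {s h τ θ ℓ L lam q Qmin : ℝ}
    {f Q u : EuclideanSpace ℝ (Fin (m+1)) → ℝ}
    (hf0 : ∀ x ∈ ball (0 : EuclideanSpace ℝ (Fin (m+1))) 1, 0 ≤ f x)
    (hQ : ContinuousOn Q (ball 0 1)) (hQmin : 0 < Qmin)
    (hQb : ∀ x ∈ ball (0 : EuclideanSpace ℝ (Fin (m+1))) 1, Qmin ≤ Q x)
    (hu : IsWeakSolution f Q u) (hs : 0 < s)
    (hx₀ : x₀ ∈ frontier (posSet u))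
    (hB : closedBall z s ⊆ ball (0 : EuclideanSpace ℝ (Fin (m+1))) 1)
    (hBzero : ∀ x ∈ ball z s, u x = 0)
    (htouch : x₀ ∈ sphere z s)
    (hm : 1 ≤ m) (hτ : 0 < τ) (hτ1 : τ ≤ 1) (hθ : 0 < θ) (hθ1 : θ ≤ 1) (hh : 0 < h)
    (hL : 0 ≤ L) (hy : y = z + (s + h) • b 0) (hhs : 4 * h ≤ s * θ ^ 2)
    (hball : closedBall y (2 * h) ⊆ ball 0 1)
    (hyl : (ℓ - θ ^ 2) * h ≤ u y)
    (hLip : ∀ x ∈ closedBall y (2 * h), u y - L * ‖x - y‖ ≤ u x)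
    (hlam : 0 < lam) (hτl : 2 * τ ≤ lam ^ 2) (hLl : L * lam < ℓ - θ ^ 2)
    (hQq : ∀ x ∈ closedBall y (2 * h), q ≤ Q x) (hq : 0 ≤ q) :
    q * (∫ w, bar m τ θ h y (pt b y (-(h * (1 + θ ^ 2)), w))) ≤
      ∫ x in frontier (posSet u) ∩ ball (0 : EuclideanSpace ℝ (Fin (m+1))) 1,
        Q x * bar m τ θ h y x ∂(μH[((m+1:ℕ):ℝ)-1]) := by
  have hηs := bar_contDiff (m := m) (τ := τ) (h := h) hθ y
  have hηc := bar_compact hm hτ hτ1 hθ hh y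
  have hηt := bar_tsupport hm hτ hτ1 hθ hh y
  have hσ1 : θ ^ 2 ≤ 1 := pow_le_one₀ hθ.le hθ1
  have hσ0 : 0 < θ ^ 2 := by positivity
  have hp := pp_pos hm
  have hQη := gamma_integrable (by omega) hf0 hQ hQmin hQb hu hs hx₀ hB hBzero htouch hηs hηc
    (hηt.trans hball) (bar_nonneg y)
  have hΓm := gamma_measurable u
  have hη : IntegrableOn (bar m τ θ h y) (frontier (posSet u) ∩ ball 0 1)
      (μH[((m+1:ℕ):ℝ)-1]) := by
    refine Integrable.mono' (hQη.const_mul Qmin⁻¹) hηs.continuous.aestronglyMeasurable ?_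
    refine (ae_restrict_iff' hΓm).2 (.of_forall fun x hx => ?_)
    rw [Real.norm_eq_abs, abs_of_nonneg (bar_nonneg y x), inv_mul_eq_div, le_div_iff₀ hQmin,
      mul_comm]
    exact mul_le_mul_of_nonneg_right (hQb x hx.2) (bar_nonneg y x)
  have hI : (∫ w, bar m τ θ h y (pt b y (-(h * (1 + θ ^ 2)), w))) ≤
      ∫ x in frontier (posSet u) ∩ ball (0 : EuclideanSpace ℝ (Fin (m+1))) 1,
        bar m τ θ h y x ∂(μH[((m+1:ℕ):ℝ)-1]) := by
    have hexp : ((m+1:ℕ):ℝ)-1 = m := by push_cast; ring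
    rw [hexp] at hη ⊢
    refine gamma_lower b y (g := fun w => bar m τ θ h y (pt b y (-(h * (1 + θ ^ 2)), w))) hΓm
      (hηs.continuous.comp ((pt_continuous b y).comp (by fun_prop)))
      (fun w => bar_nonneg y _) (bar_nonneg y) hη (h * (1 + θ ^ 2)) ?_ ?_
    · intro w hw
      simp only [bar_pt] at hw
      have hW0 : 0 ≤ ∑ j, w j ^ 2 := by positivity
      have h1 := psi_pos_lt hp (by linarith) hw
      have h2 : (1 + θ ^ 2) ^ 2 + h⁻¹ ^ 2 * ∑ j, w j ^ 2 < 1 + 2 * τ := by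
        have e : h⁻¹ ^ 2 * ((-(h * (1 + θ ^ 2))) ^ 2 + ∑ j, w j ^ 2) =
          (1 + θ ^ 2) ^ 2 + h⁻¹ ^ 2 * ∑ j, w j ^ 2 := by
          field_simp
        rw [e] at h1
        have : 0 < θ ^ 4 := by positivity
        linarith
      have h3 : h⁻¹ ^ 2 * ∑ j, w j ^ 2 < 2 * τ := by nlinarith
      have h4 : ∑ j, w j ^ 2 < 2 * τ * h ^ 2 := by
        rw [inv_pow, inv_mul_eq_div, div_lt_iff₀ (by positivity)] at h3
        exact h3
      have h5 : h ^ 2 * (1 + θ ^ 2) ^ 2 + ∑ j, w j ^ 2 < 3 * h ^ 2 := by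
        have e : h ^ 2 * (1 + θ ^ 2) ^ 2 + ∑ j, w j ^ 2 =
          h ^ 2 * ((1 + θ ^ 2) ^ 2 + h⁻¹ ^ 2 * ∑ j, w j ^ 2) := by field_simp
        rw [e]
        have := mul_lt_mul_of_pos_left h2 (by positivity : 0 < h ^ 2)
        nlinarith
      have hseg : ∀ t ∈ Icc (-(h * (1 + θ ^ 2))) 0, pt b y (t, w) ∈ closedBall y (2 * h) := by
        intro t ht
        rw [mem_closedBall, dist_eq_norm]
        refine le_of_abs_le (abs_le_of_sq_le_sq ?_ (by linarith))
        rw [norm_sq_pt]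
        have : t ^ 2 ≤ h ^ 2 * (1 + θ ^ 2) ^ 2 := by
          have : |t| ≤ |h * (1 + θ ^ 2)| := by
            rw [abs_of_nonpos ht.2, abs_of_pos (by positivity)]; linarith [ht.1]
          have := sq_le_sq.2 this
          linarith
        simp only
        nlinarith
      have hle : -(h * (1 + θ ^ 2)) ≤ 0 := by
        have : 0 < h * (1 + θ ^ 2) := by positivity
        linarith
      obtain ⟨t, ht, hx⟩ := exists_crossing (u := u) (fun t => pt b y (t, w))
        ((pt_continuous b y).comp (by fun_prop)) hle
        (by
          intro hpos
          have : pt b y (-(h * (1 + θ ^ 2)), w) ∈ ball z s := by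
            rw [mem_ball, dist_eq_norm]
            refine lt_of_pow_lt_pow_left₀ 2 hs.le ?_
            rw [norm_sq_z b hy, cT_pt, cW_pt]
            simp only
            have h6 := mul_le_mul_of_nonneg_right hhs hh.le
            have h7 : h ^ 2 * (θ ^ 2) ^ 2 ≤ h ^ 2 := by
              have : (θ ^ 2) ^ 2 ≤ 1 := pow_le_one₀ hσ0.le hσ1
              nlinarith [sq_nonneg h]
            have h8 : 2 * τ * h ^ 2 ≤ 2 * h ^ 2 := by nlinarith [sq_nonneg h]
            have e : (s + h + -(h * (1 + θ ^ 2))) ^ 2 + ∑ j, w j ^ 2 =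
              s ^ 2 - 2 * (s * θ ^ 2 * h) + h ^ 2 * (θ ^ 2) ^ 2 + ∑ j, w j ^ 2 := by ring
            rw [e]
            have h9 : 0 ≤ h ^ 2 := sq_nonneg h
            linarith
          have h0 := hBzero _ this
          exact absurd hpos.2 (by rw [h0]; exact lt_irrefl _))
        (by
          refine ⟨hball (hseg 0 ⟨hle, le_rfl⟩), ?_⟩
          have h6 := hLip _ (hseg 0 ⟨hle, le_rfl⟩)
          have h7 : ‖pt b y (0, w) - y‖ ≤ lam * h := by
            refine le_of_abs_le (abs_le_of_sq_le_sq ?_ (by positivity))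
            rw [norm_sq_pt]
            simp only
            nlinarith [sq_nonneg h]
          have h8 := mul_le_mul_of_nonneg_left h7 hL
          have h9 := mul_lt_mul_of_pos_right hLl hh
          linarith)
      refine ⟨pt b y (t, w), ⟨hx, hball (hseg t ht)⟩, ?_, cW_pt b y _⟩
      rw [cT_pt]
      simp only
      rw [abs_of_nonpos ht.2]
      linarith [ht.1]
    · intro x hx hxT
      simp only [bar_pt]
      unfold bar rad
      refine psi_antitone hp (by positivity) ?_
      rw [norm_sq_coords b y x]
      have : cT b y x ^ 2 ≤ (-(h * (1 + θ ^ 2))) ^ 2 := by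
        rw [neg_sq]
        exact sq_le_sq.2 (hxT.trans (le_abs_self _))
      gcongr
  calc _ ≤ q * ∫ x in frontier (posSet u) ∩ ball (0 : EuclideanSpace ℝ (Fin (m+1))) 1,
        bar m τ θ h y x ∂(μH[((m+1:ℕ):ℝ)-1]) := mul_le_mul_of_nonneg_left hI hq
    _ = ∫ x in frontier (posSet u) ∩ ball (0 : EuclideanSpace ℝ (Fin (m+1))) 1,
        q * bar m τ θ h y x ∂(μH[((m+1:ℕ):ℝ)-1]) := (integral_const_mul _ _).symm
    _ ≤ _ := by
        refine setIntegral_mono_on (hη.const_mul q) hQη hΓm fun x hx => ?_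
        by_cases hx' : x ∈ closedBall y (2 * h)
        · exact mul_le_mul_of_nonneg_right (hQq x hx') (bar_nonneg y x)
        · rw [image_eq_zero_of_notMem_tsupport (fun hh => hx' (hηt hh))]
          simp


/-! ### Remaining integrals and the combined inequality -/

def KK (m : ℕ) (τ θ : ℝ) : ℝ := psi (pp m) (θ ^ 4) ((1 + 2 * τ) ^ (-(pp m))) 0

lemma bar_le_KK {m : ℕ} (hm : 1 ≤ m) {τ θ h : ℝ} (hθ : 0 < θ)
    (y x : EuclideanSpace ℝ (Fin (m+1))) : bar m τ θ h y x ≤ KK m τ θ := by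
  unfold bar rad KK
  exact psi_antitone (pp_pos hm) (by positivity) (by positivity)

lemma f_est {m : ℕ} {y : EuclideanSpace ℝ (Fin (m+1))} {h τ θ F : ℝ}
    {f Q u : EuclideanSpace ℝ (Fin (m+1)) → ℝ}
    (hf0 : ∀ x ∈ ball (0 : EuclideanSpace ℝ (Fin (m+1))) 1, 0 ≤ f x)
    (hu : IsWeakSolution f Q u)
    (hm : 1 ≤ m) (hτ : 0 < τ) (hτ1 : τ ≤ 1) (hθ : 0 < θ) (hh : 0 < h) (hF : 0 ≤ F)
    (hfF : ∀ x ∈ closedBall y (2 * h), f x ≤ F) :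
    ∫ x in posSet u, f x * bar m τ θ h y x ≤
      F * KK m τ θ * 2 ^ (m + 1) *
        (volume : Measure (EuclideanSpace ℝ (Fin (m+1)))).real (ball 0 1) * h * h ^ m := by
  have hηt := bar_tsupport hm hτ hτ1 hθ hh y
  have hK : 0 ≤ KK m τ θ := psi_nonneg _ _ _ _
  have hi : Integrable ((closedBall y (2 * h)).indicator (fun _ => F * KK m τ θ)) := by
    rw [integrable_indicator_iff measurableSet_closedBall]
    exact integrableOn_const measure_closedBall_lt_top.ne
  have hvol : (volume : Measure (EuclideanSpace ℝ (Fin (m+1)))).real (closedBall y (2 * h)) =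
      (2 * h) ^ (m + 1) *
        (volume : Measure (EuclideanSpace ℝ (Fin (m+1)))).real (ball 0 1) := by
    rw [Measure.real, Measure.addHaar_closedBall _ _ (by positivity), ENNReal.toReal_mul,
      ENNReal.toReal_ofReal (by positivity)]
    simp [Measure.real]
  calc ∫ x in posSet u, f x * bar m τ θ h y x
      ≤ ∫ x in posSet u, (closedBall y (2 * h)).indicator (fun _ => F * KK m τ θ) x := by
        refine integral_mono_of_nonneg ?_ hi.integrableOn ?_
        · refine (ae_restrict_iff' (posSet_measurable hu)).2 (.of_forall fun x hx => ?_)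
          exact mul_nonneg (hf0 x hx.1) (bar_nonneg y x)
        · refine (ae_restrict_iff' (posSet_measurable hu)).2 (.of_forall fun x hx => ?_)
          by_cases hx' : x ∈ closedBall y (2 * h)
          · simp only [indicator_of_mem hx']
            exact mul_le_mul (hfF x hx') (bar_le_KK hm hθ y x) (bar_nonneg y x) hF
          · simp only [indicator_of_notMem hx']
            rw [image_eq_zero_of_notMem_tsupport (fun hh => hx' (hηt hh)), mul_zero]
    _ ≤ ∫ x, (closedBall y (2 * h)).indicator (fun _ => F * KK m τ θ) x :=
        setIntegral_le_integral hi
          (.of_forall fun x => indicator_nonneg (fun _ _ => mul_nonneg hF hK) x)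
    _ = _ := by
        rw [integral_indicator measurableSet_closedBall, setIntegral_const, hvol, smul_eq_mul,
          mul_pow, pow_succ h m]
        ring

def GG (m : ℕ) (τ r : ℝ) : ℝ :=
  (2 * r) ^ m * chi ((1 + 3 * τ / 2) ^ (-(pp m)) - (1 + 2 * τ) ^ (-(pp m)))

lemma GG_pos {m : ℕ} (hm : 1 ≤ m) {τ r : ℝ} (hτ : 0 < τ) (hr : 0 < r) : 0 < GG m τ r := by
  unfold GG
  refine mul_pos (by positivity) (chi_pos ?_)
  have := Real.rpow_lt_rpow_of_neg (z := -(pp m)) (x := 1 + 3 * τ / 2) (y := 1 + 2 * τ)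
    (by linarith) (by linarith) (by linarith [pp_pos hm])
  linarith

lemma I_lower {m : ℕ} (b : OrthonormalBasis (Fin (m+1)) ℝ (EuclideanSpace ℝ (Fin (m+1))))
    {y : EuclideanSpace ℝ (Fin (m+1))} {h τ θ r : ℝ}
    (hm : 1 ≤ m) (hτ : 0 < τ) (hτ1 : τ ≤ 1) (hθ : 0 < θ) (hh : 0 < h) (hr : 0 < r)
    (hsmall : (1 + θ ^ 2) ^ 2 + m * r ^ 2 + θ ^ 4 ≤ 1 + 3 * τ / 2) :
    GG m τ r * h ^ m ≤ ∫ w, bar m τ θ h y (pt b y (-(h * (1 + θ ^ 2)), w)) := by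
  have hp := pp_pos hm
  have hηs := bar_contDiff (m := m) (τ := τ) (h := h) hθ y
  have hηt := bar_tsupport hm hτ hτ1 hθ hh y
  set g : (Fin m → ℝ) → ℝ := fun w => bar m τ θ h y (pt b y (-(h * (1 + θ ^ 2)), w)) with hg
  have hgc : Continuous g := hηs.continuous.comp ((pt_continuous b y).comp (by fun_prop))
  have hgs : HasCompactSupport g := by
    refine HasCompactSupport.intro (isCompact_closedBall (0 : Fin m → ℝ) (2 * h)) ?_
    intro w hw
    show bar m τ θ h y (pt b y (-(h * (1 + θ ^ 2)), w)) = 0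
    apply image_eq_zero_of_notMem_tsupport (f := bar m τ θ h y)
    intro hmem
    apply hw
    have h1 := hηt hmem
    rw [mem_closedBall, dist_eq_norm] at h1
    rw [mem_closedBall, dist_zero_right, pi_norm_le_iff_of_nonneg (by positivity)]
    intro j
    have h2 := norm_sq_pt b y (-(h * (1 + θ ^ 2)), w)
    have h3 : w j ^ 2 ≤ ∑ j, w j ^ 2 :=
      Finset.single_le_sum (f := fun j => w j ^ 2) (fun i _ => sq_nonneg _) (Finset.mem_univ j)
    rw [Real.norm_eq_abs]
    refine le_trans (abs_le_of_sq_le_sq ?_ (norm_nonneg _)) h1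
    rw [h2]
    simp only
    nlinarith [sq_nonneg (h * (1 + θ ^ 2))]
  have hgi : Integrable g := hgc.integrable_of_hasCompactSupport hgs
  have hvol : (volume : Measure (Fin m → ℝ)).real (closedBall 0 (r * h)) = (2 * (r * h)) ^ m := by
    rw [Measure.real, Real.volume_pi_closedBall _ (by positivity), Fintype.card_fin,
      ENNReal.toReal_ofReal (by positivity)]
  have hlow : ∀ w ∈ closedBall (0 : Fin m → ℝ) (r * h),
      chi ((1 + 3 * τ / 2) ^ (-(pp m)) - (1 + 2 * τ) ^ (-(pp m))) ≤ g w := by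
    intro w hw
    rw [mem_closedBall, dist_zero_right, pi_norm_le_iff_of_nonneg (by positivity)] at hw
    simp only [hg, bar_pt]
    unfold psi
    apply chi_mono
    have hsum : ∑ j, w j ^ 2 ≤ m * (r * h) ^ 2 := by
      calc ∑ j, w j ^ 2 ≤ ∑ _j : Fin m, (r * h) ^ 2 := by
            refine Finset.sum_le_sum fun j _ => ?_
            have := hw j
            rw [Real.norm_eq_abs] at this
            exact sq_le_sq.2 (this.trans (le_abs_self _))
        _ = _ := by simp
    have hb : h⁻¹ ^ 2 * ((-(h * (1 + θ ^ 2))) ^ 2 + ∑ j, w j ^ 2) + θ ^ 4 ≤ 1 + 3 * τ / 2 := by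
      have : h⁻¹ ^ 2 * ((-(h * (1 + θ ^ 2))) ^ 2 + ∑ j, w j ^ 2) ≤
          h⁻¹ ^ 2 * ((-(h * (1 + θ ^ 2))) ^ 2 + m * (r * h) ^ 2) := by gcongr
      have e : h⁻¹ ^ 2 * ((-(h * (1 + θ ^ 2))) ^ 2 + m * (r * h) ^ 2) =
          (1 + θ ^ 2) ^ 2 + m * r ^ 2 := by field_simp
      linarith
    have := Real.rpow_le_rpow_of_nonpos (z := -(pp m)) (by positivity) hb (by linarith)
    linarith
  calc GG m τ r * h ^ m
      = ∫ _w in closedBall (0 : Fin m → ℝ) (r * h),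
          chi ((1 + 3 * τ / 2) ^ (-(pp m)) - (1 + 2 * τ) ^ (-(pp m))) := by
        rw [setIntegral_const, hvol, smul_eq_mul]
        unfold GG
        rw [mul_pow, mul_pow, mul_pow]
        ring
    _ ≤ ∫ w in closedBall (0 : Fin m → ℝ) (r * h), g w :=
        setIntegral_mono_on (integrableOn_const measure_closedBall_lt_top.ne) hgi.integrableOn
          measurableSet_closedBall hlow
    _ ≤ ∫ w, g w := setIntegral_le_integral hgi (.of_forall fun w => bar_nonneg y _)

lemma combined {m : ℕ} (b : OrthonormalBasis (Fin (m+1)) ℝ (EuclideanSpace ℝ (Fin (m+1))))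
    {x₀ y z : EuclideanSpace ℝ (Fin (m+1))} {s h τ θ ℓ L lam q Qmin F r : ℝ}
    {f Q u : EuclideanSpace ℝ (Fin (m+1)) → ℝ}
    (hf0 : ∀ x ∈ ball (0 : EuclideanSpace ℝ (Fin (m+1))) 1, 0 ≤ f x)
    (hQ : ContinuousOn Q (ball 0 1)) (hQmin : 0 < Qmin)
    (hQb : ∀ x ∈ ball (0 : EuclideanSpace ℝ (Fin (m+1))) 1, Qmin ≤ Q x)
    (hu : IsWeakSolution f Q u) (hs : 0 < s)
    (hx₀ : x₀ ∈ frontier (posSet u))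
    (hB : closedBall z s ⊆ ball (0 : EuclideanSpace ℝ (Fin (m+1))) 1)
    (hBzero : ∀ x ∈ ball z s, u x = 0)
    (htouch : x₀ ∈ sphere z s)
    (hm : 1 ≤ m) (hτ : 0 < τ) (hτ1 : τ ≤ 1) (hθ : 0 < θ) (hθ1 : θ ≤ 1) (hh : 0 < h)
    (hL : 0 ≤ L) (hℓ : 0 ≤ ℓ) (hy : y = z + (s + h) • b 0) (hhs : 4 * h ≤ s * θ ^ 2)
    (hball : closedBall y (2 * h) ⊆ ball 0 1)
    (hup : ∀ x ∈ closedBall y (2 * h), u x ≤ (ℓ + θ ^ 2) * max (‖x - z‖ - s) 0)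
    (hyl : (ℓ - θ ^ 2) * h ≤ u y)
    (hLip : ∀ x ∈ closedBall y (2 * h), u y - L * ‖x - y‖ ≤ u x)
    (hlam : 0 < lam) (hτl : 2 * τ ≤ lam ^ 2) (hLl : L * lam < ℓ - θ ^ 2)
    (hQq : ∀ x ∈ closedBall y (2 * h), q ≤ Q x) (hqℓ : ℓ + θ ^ 2 ≤ q)
    (hF : 0 ≤ F) (hfF : ∀ x ∈ closedBall y (2 * h), f x ≤ F) (hr : 0 < r)
    (hsmall : (1 + θ ^ 2) ^ 2 + m * r ^ 2 + θ ^ 4 ≤ 1 + 3 * τ / 2) :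
    (q - ℓ - θ ^ 2) * GG m τ r ≤ CC2 m ℓ L * θ + F * KK m τ θ * 2 ^ (m + 1) *
        (volume : Measure (EuclideanSpace ℝ (Fin (m+1)))).real (ball 0 1) * h := by
  have hq : 0 ≤ q := le_trans (by positivity) hqℓ
  have h1 := upper_est b hm hτ hτ1 hθ hθ1 hh hℓ hL hy hhs hball hu.contOn hup hyl hLip
  have h2 := lower_est b hf0 hQ hQmin hQb hu hs hx₀ hB hBzero htouch hm hτ hτ1 hθ hθ1 hh hL hy hhs
    hball hyl hLip hlam hτl hLl hQq hq
  have h3 := f_est hf0 hu hm hτ hτ1 hθ hh hF hfF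
  have h4 := I_lower b (y := y) hm hτ hτ1 hθ hh hr hsmall
  have h5 := weakLap hu (bar_contDiff (m := m) (τ := τ) (h := h) hθ y)
    (bar_compact hm hτ hτ1 hθ hh y) ((bar_tsupport hm hτ hτ1 hθ hh y).trans hball)
  have h6 := mul_le_mul_of_nonneg_left h4 (by linarith : 0 ≤ q - ℓ - θ ^ 2)
  have hhm : 0 < h ^ m := by positivity
  refine le_of_mul_le_mul_right ?_ hhm
  rw [h5] at h1
  generalize (∫ w, bar m τ θ h y (pt b y (-(h * (1 + θ ^ 2)), w))) = I at *
  have h7 : (q - ℓ - θ ^ 2) * I ≤ CC2 m ℓ L * θ * h ^ m + F * KK m τ θ * 2 ^ (m + 1) *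
        (volume : Measure (EuclideanSpace ℝ (Fin (m+1)))).real (ball 0 1) * h * h ^ m := by
    linarith
  linarith


/-! ### Auxiliary facts for the main argument -/

lemma exists_basis {m : ℕ} (e : EuclideanSpace ℝ (Fin (m+1))) (he : ‖e‖ = 1) :
    ∃ b : OrthonormalBasis (Fin (m+1)) ℝ (EuclideanSpace ℝ (Fin (m+1))), b 0 = e := by
  obtain ⟨b, hb⟩ := Orthonormal.exists_orthonormalBasis_extension_of_card_eq
    (𝕜 := ℝ) (E := EuclideanSpace ℝ (Fin (m+1))) (ι := Fin (m+1)) (by simp)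
    (v := fun _ => e) (s := {0}) (by
      constructor
      · intro i; simpa using he
      · intro i j hij
        exact absurd (Subsingleton.elim i j) hij)
  exact ⟨b, hb 0 rfl⟩

lemma average_le {E : Type*} [MeasurableSpace E] (μ : Measure E) (A : Set E) (u : E → ℝ) {C : ℝ}
    (hC : 0 ≤ C) (h : ∀ x ∈ A, ‖u x‖ ≤ C) : ⨍ x in A, u x ∂μ ≤ C := by
  rw [setAverage_eq, smul_eq_mul]
  by_cases hA : μ A = ⊤
  · simp [Measure.real, hA, hC]
  · have h1 := norm_setIntegral_le_of_norm_le_const (lt_top_iff_ne_top.2 hA) h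
    have h2 : ∫ x in A, u x ∂μ ≤ C * μ.real A := (le_abs_self _).trans h1
    rcases eq_or_lt_of_le (measureReal_nonneg (μ := μ) (s := A)) with h0 | h0
    · rw [← h0]; simpa using hC
    · rw [inv_mul_eq_div, div_le_iff₀ h0]
      exact h2

lemma D_le {m : ℕ} {x₀ z : EuclideanSpace ℝ (Fin (m+1))} {s : ℝ} (htouch : x₀ ∈ sphere z s)
    (x : EuclideanSpace ℝ (Fin (m+1))) : max (‖x - z‖ - s) 0 ≤ ‖x - x₀‖ := by
  rw [mem_sphere, dist_eq_norm] at htouch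
  apply max_le _ (norm_nonneg _)
  have := norm_sub_le_norm_sub_add_norm_sub x x₀ z
  linarith

/-- nondegeneracy: the linear growth constant is positive -/
lemma growth_pos {m : ℕ} {f Q u : EuclideanSpace ℝ (Fin (m+1)) → ℝ}
    {x₀ z : EuclideanSpace ℝ (Fin (m+1))} {s : ℝ}
    (hu : IsWeakSolution f Q u)
    (hx₀ : x₀ ∈ frontier (posSet u)) (hx₀' : x₀ ∈ ball (0 : EuclideanSpace ℝ (Fin (m+1))) 1)
    (htouch : x₀ ∈ sphere z s) :
    ∃ σ > 0, ¬ ∃ r > 0, ∀ x ∈ ball x₀ r, x ∈ posSet u → u x ≤ σ * max (‖x - z‖ - s) 0 := by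
  obtain ⟨r', hr', hsub⟩ := nhds_basis_closedBall.mem_iff.1 (isOpen_ball.mem_nhds hx₀')
  obtain ⟨c, C, hc, hcC, hnd⟩ := hu.nondeg (ball x₀ r') isOpen_ball
    (closure_ball_subset_closedBall.trans hsub)
  refine ⟨c / 2, by linarith, ?_⟩
  rintro ⟨r, hr, hb⟩
  set t := min r r' / 2 with ht
  have hm0 : 0 < min r r' := lt_min hr hr'
  have ht0 : 0 < t := by positivity
  have htr : t < r := by have := min_le_left r r'; linarith
  have htr' : t < r' := by have := min_le_right r r'; linarith
  have h1 := (hnd x₀ t ht0 (ball_subset_ball htr'.le) hx₀).1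
  have h2 := average_le (μH[((m+1:ℕ):ℝ)-1]) (sphere x₀ t) u (C := c / 2 * t) (by positivity) (by
    intro x hx
    have hxd : ‖x - x₀‖ = t := by rwa [mem_sphere, dist_eq_norm] at hx
    have hxB : x ∈ ball (0 : EuclideanSpace ℝ (Fin (m+1))) 1 :=
      hsub (by rw [mem_closedBall, dist_eq_norm]; linarith)
    rw [Real.norm_eq_abs, abs_of_nonneg (hu.nonneg x hxB)]
    by_cases hp : x ∈ posSet u
    · refine (hb x (by rw [mem_ball, dist_eq_norm]; linarith) hp).trans ?_
      rw [← hxd]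
      exact mul_le_mul_of_nonneg_left (D_le htouch x) (by linarith)
    · have : ¬ 0 < u x := fun h => hp ⟨hxB, h⟩
      have h0 : 0 ≤ c / 2 * t := by positivity
      linarith)
  have h3 := mul_le_mul_of_nonneg_left h2 (by positivity : 0 ≤ 1 / t)
  have h4 : 1 / t * (c / 2 * t) = c / 2 := by field_simp
  linarith


/-! ### Main argument -/

lemma small_param {ℓ q τ G K : ℝ} (hℓ : 0 < ℓ) (hq : ℓ < q) (hτ : 0 < τ) (hG : 0 < G) :
    ∃ θ : ℝ, 0 < θ ∧ θ ≤ 1 ∧ 4 * θ ^ 2 ≤ τ ∧ θ ^ 2 ≤ ℓ / 2 ∧ θ ^ 2 ≤ (q - ℓ) / 2 ∧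
      K * θ < (q - ℓ) * G / 4 := by
  have hpos : 0 < (q - ℓ) * G / 4 := by
    have : 0 < q - ℓ := by linarith
    positivity
  have e : ∀ {φ : ℝ → ℝ} {c : ℝ}, Continuous φ → φ 0 = 0 → 0 < c → ∀ᶠ θ in 𝓝[>] (0:ℝ), φ θ < c := by
    intro φ c hφ h0 hc
    have : Tendsto φ (𝓝[>] 0) (𝓝 0) := by
      have := hφ.tendsto 0
      rw [h0] at this
      exact this.mono_left nhdsWithin_le_nhds
    exact this.eventually_lt_const hc
  have h1 := e (φ := fun θ => θ) (c := 1) (by fun_prop) rfl one_pos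
  have h2 := e (φ := fun θ => 4 * θ ^ 2) (c := τ) (by fun_prop) (by simp) hτ
  have h3 := e (φ := fun θ => θ ^ 2) (c := ℓ / 2) (by fun_prop) (by simp) (by linarith)
  have h4 := e (φ := fun θ => θ ^ 2) (c := (q - ℓ) / 2) (by fun_prop) (by simp) (by linarith)
  have h5 := e (φ := fun θ => K * θ) (c := (q - ℓ) * G / 4) (by fun_prop) (by simp) hpos
  have h6 : ∀ᶠ θ in 𝓝[>] (0:ℝ), 0 < θ := self_mem_nhdsWithin
  obtain ⟨θ, a1, a2, a3, a4, a5, a6⟩ :=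
    (h1.and (h2.and (h3.and (h4.and (h5.and h6))))).exists
  exact ⟨θ, a6, a1.le, a2.le, a3.le, a4.le, a5⟩

set_option maxHeartbeats 2000000 in
lemma main_closed {m : ℕ} (hm : 1 ≤ m) {x₀ z : EuclideanSpace ℝ (Fin (m+1))} {s Qmin a₀ ρ : ℝ}
    {f Q u : EuclideanSpace ℝ (Fin (m+1)) → ℝ}
    (hf : ContinuousOn f (ball 0 1))
    (hf0 : ∀ x ∈ ball (0 : EuclideanSpace ℝ (Fin (m+1))) 1, 0 ≤ f x)
    (hQ : ContinuousOn Q (ball 0 1)) (hQmin : 0 < Qmin)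
    (hQb : ∀ x ∈ ball (0 : EuclideanSpace ℝ (Fin (m+1))) 1, Qmin ≤ Q x)
    (hu : IsWeakSolution f Q u) (hs : 0 < s)
    (hx₀ : x₀ ∈ frontier (posSet u)) (hx₀' : x₀ ∈ ball (0 : EuclideanSpace ℝ (Fin (m+1))) 1)
    (hB : closedBall z s ⊆ ball (0 : EuclideanSpace ℝ (Fin (m+1))) 1)
    (hBzero : ∀ x ∈ ball z s, u x = 0)
    (htouch : x₀ ∈ sphere z s) (ha₀ : 0 ≤ a₀) (ha₀Q : a₀ < Q x₀) (hρ : 0 < ρ)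
    (hbad : ∀ x ∈ ball x₀ ρ, x ∈ posSet u → u x ≤ a₀ * max (‖x - z‖ - s) 0) : False := by
  set S : Set ℝ := {a | 0 ≤ a ∧ ∃ r > 0, ∀ x ∈ ball x₀ r, x ∈ posSet u →
    u x ≤ a * max (‖x - z‖ - s) 0} with hS
  have hSa : a₀ ∈ S := ⟨ha₀, ρ, hρ, hbad⟩
  have hSb : BddBelow S := ⟨0, fun a ha => ha.1⟩
  set ℓ := sInf S with hℓdef
  have hℓa : ℓ ≤ a₀ := csInf_le hSb hSa
  have hP : ∀ σ > 0, ∃ r > 0, ∀ x ∈ ball x₀ r, x ∈ posSet u →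
      u x ≤ (ℓ + σ) * max (‖x - z‖ - s) 0 := by
    intro σ hσ
    obtain ⟨a, ⟨_, r, hr, hr'⟩, ha⟩ := exists_lt_of_csInf_lt ⟨a₀, hSa⟩ (by linarith : ℓ < ℓ + σ)
    exact ⟨r, hr, fun x hx hxp => (hr' x hx hxp).trans
      (mul_le_mul_of_nonneg_right ha.le (le_max_right _ _))⟩
  have hN : ∀ σ > 0, σ ≤ ℓ → ∀ r > 0, ∃ x ∈ ball x₀ r, x ∈ posSet u ∧
      (ℓ - σ) * max (‖x - z‖ - s) 0 < u x := by
    intro σ hσ hσℓ r hr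
    by_contra hcon
    push Not at hcon
    have : ℓ - σ ∈ S := ⟨by linarith, r, hr, hcon⟩
    have := csInf_le hSb this
    linarith
  have hℓ : 0 < ℓ := by
    have h0 : 0 ≤ ℓ := le_csInf ⟨a₀, hSa⟩ fun a ha => ha.1
    rcases eq_or_lt_of_le h0 with h | h
    · exfalso
      obtain ⟨σ, hσ, hno⟩ := growth_pos hu hx₀ hx₀' htouch
      apply hno
      have := hP σ hσ
      rwa [← h, zero_add] at this
    · exact h
  -- constants
  obtain ⟨r₂, hr₂, hr₂B⟩ := nhds_basis_closedBall.mem_iff.1 (isOpen_ball.mem_nhds hx₀')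
  obtain ⟨L, hL⟩ := hu.locLip _ (isCompact_closedBall x₀ r₂) hr₂B
  obtain ⟨F, hF⟩ := (isCompact_closedBall x₀ r₂).exists_bound_of_continuousOn (hf.mono hr₂B)
  have hF0 : 0 ≤ F := (norm_nonneg _).trans (hF x₀ (mem_closedBall_self hr₂.le))
  set q := (Q x₀ + a₀) / 2 with hq
  have hq1 : q < Q x₀ := by linarith
  have hℓq : ℓ < q := by linarith
  obtain ⟨r₃, hr₃, hr₃Q⟩ : ∃ r₃ > 0, ∀ x ∈ ball x₀ r₃, q ≤ Q x := by
    have := (hQ.continuousAt (isOpen_ball.mem_nhds hx₀')).eventually_const_lt hq1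
    obtain ⟨r, hr, h⟩ := Metric.eventually_nhds_iff_ball.1 this
    exact ⟨r, hr, fun x hx => (h x hx).le⟩
  set lam : ℝ := min 1 (ℓ / (4 * ((L:ℝ) + 1))) with hlam
  have hL0 : (0:ℝ) ≤ L := L.2
  have hlam0 : 0 < lam := lt_min one_pos (by positivity)
  have hlam1 : lam ≤ 1 := min_le_left _ _
  have hLlam : (L:ℝ) * lam ≤ ℓ / 4 := by
    have h1 : lam ≤ ℓ / (4 * ((L:ℝ) + 1)) := min_le_right _ _
    rw [le_div_iff₀ (by positivity)] at h1
    nlinarith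
  set τ : ℝ := lam ^ 2 / 2 with hτdef
  have hτ : 0 < τ := by positivity
  have hτ1 : τ ≤ 1 := by
    have : lam ^ 2 ≤ 1 := pow_le_one₀ hlam0.le hlam1
    linarith
  have hm' : (1:ℝ) ≤ m := by exact_mod_cast hm
  have hm0 : (0:ℝ) < m := by linarith
  set r : ℝ := τ / (2 * m) with hr
  have hr0 : 0 < r := by positivity
  have hmr : m * r ^ 2 ≤ τ / 2 := by
    have e : m * r ^ 2 = τ ^ 2 / (4 * m) := by rw [hr]; field_simp; norm_num
    rw [e, div_le_iff₀ (by positivity)]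
    nlinarith
  have hG := GG_pos hm hτ hr0
  obtain ⟨θ, hθ, hθ1, hθτ, hθℓ, hθq, hθC⟩ :=
    small_param (K := CC2 m ℓ L) hℓ hℓq hτ hG
  have hσ0 : 0 < θ ^ 2 := by positivity
  obtain ⟨r₁, hr₁, hr₁u⟩ := hP (θ ^ 2) hσ0
  set W : ℝ := F * KK m τ θ * 2 ^ (m + 1) *
        (volume : Measure (EuclideanSpace ℝ (Fin (m+1)))).real (ball 0 1) with hW
  have hW0 : 0 ≤ W := by
    have : 0 ≤ KK m τ θ := psi_nonneg _ _ _ _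
    positivity
  have hgap : 0 < (q - ℓ) * GG m τ r / 4 := by
    have : 0 < q - ℓ := by linarith
    positivity
  obtain ⟨δ, hδ, hδ1, hδ2, hδ3, hδ4, hδ5⟩ : ∃ δ : ℝ, 0 < δ ∧ 3 * δ ≤ r₁ ∧ 3 * δ ≤ r₂ ∧ 3 * δ ≤ r₃ ∧
      4 * δ ≤ s * θ ^ 2 ∧ W * δ < (q - ℓ) * GG m τ r / 4 := by
    refine ⟨min (min (r₁ / 3) (r₂ / 3)) (min (min (r₃ / 3) (s * θ ^ 2 / 4))
      ((q - ℓ) * GG m τ r / 4 / (W + 1))), by positivity, ?_, ?_, ?_, ?_, ?_⟩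
    · have : min (min (r₁ / 3) (r₂ / 3)) (min (min (r₃ / 3) (s * θ ^ 2 / 4))
        ((q - ℓ) * GG m τ r / 4 / (W + 1))) ≤ r₁ / 3 := by simp
      linarith
    · have : min (min (r₁ / 3) (r₂ / 3)) (min (min (r₃ / 3) (s * θ ^ 2 / 4))
        ((q - ℓ) * GG m τ r / 4 / (W + 1))) ≤ r₂ / 3 := by simp
      linarith
    · have : min (min (r₁ / 3) (r₂ / 3)) (min (min (r₃ / 3) (s * θ ^ 2 / 4))
        ((q - ℓ) * GG m τ r / 4 / (W + 1))) ≤ r₃ / 3 := by simp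
      linarith
    · have : min (min (r₁ / 3) (r₂ / 3)) (min (min (r₃ / 3) (s * θ ^ 2 / 4))
        ((q - ℓ) * GG m τ r / 4 / (W + 1))) ≤ s * θ ^ 2 / 4 := by simp
      linarith
    · have h1 : min (min (r₁ / 3) (r₂ / 3)) (min (min (r₃ / 3) (s * θ ^ 2 / 4))
        ((q - ℓ) * GG m τ r / 4 / (W + 1))) ≤ (q - ℓ) * GG m τ r / 4 / (W + 1) := by simp
      refine (mul_le_mul_of_nonneg_left h1 hW0).trans_lt ?_
      rw [mul_div_assoc', div_lt_iff₀ (by positivity)]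
      nlinarith
  obtain ⟨y, hyδ, hyp, hyu⟩ := hN (θ ^ 2) hσ0 (by linarith) δ hδ
  rw [mem_ball, dist_eq_norm] at hyδ
  have hDy := hr₁u y (by rw [mem_ball, dist_eq_norm]; linarith) hyp
  have hDpos : 0 < max (‖y - z‖ - s) 0 := by
    rcases eq_or_lt_of_le (le_max_right (‖y - z‖ - s) 0) with h | h
    · exfalso
      rw [← h, mul_zero] at hDy
      exact absurd hyp.2 (not_lt.2 hDy)
    · exact h
  have hh : 0 < ‖y - z‖ - s := by
    rcases lt_max_iff.1 hDpos with h | h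
    · exact h
    · exact absurd h (lt_irrefl _)
  set h := ‖y - z‖ - s with hhdef
  have hmax : max h 0 = h := max_eq_left hh.le
  rw [hmax] at hyu
  have hhδ : h < δ := by
    have := D_le htouch y
    rw [← hhdef, hmax] at this
    linarith
  have hnz : 0 < ‖y - z‖ := by linarith
  obtain ⟨b, hb⟩ := exists_basis (‖y - z‖⁻¹ • (y - z)) (by
    rw [norm_smul, norm_inv, norm_norm, inv_mul_cancel₀ hnz.ne'])
  have hy : y = z + (s + h) • b 0 := by
    have : s + h = ‖y - z‖ := by rw [hhdef]; ring
    rw [hb, this, smul_smul, mul_inv_cancel₀ hnz.ne', one_smul]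
    abel
  have hin : ∀ x ∈ closedBall y (2 * h), ‖x - x₀‖ < 3 * δ := by
    intro x hx
    rw [mem_closedBall, dist_eq_norm] at hx
    have := norm_sub_le_norm_sub_add_norm_sub x y x₀
    linarith
  have hin2 : closedBall y (2 * h) ⊆ closedBall x₀ r₂ := by
    intro x hx
    have := hin x hx
    rw [mem_closedBall, dist_eq_norm]
    linarith
  have hyself : y ∈ closedBall y (2 * h) := mem_closedBall_self (by positivity)
  have key := combined b (x₀ := x₀) (y := y) (z := z) (s := s) (h := h) (τ := τ) (θ := θ) (ℓ := ℓ)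
    (L := L) (lam := lam) (q := q) (F := F) (r := r) hf0 hQ hQmin hQb hu hs hx₀ hB hBzero htouch hm
    hτ hτ1 hθ hθ1 hh hL0 hℓ.le hy (by linarith) (hin2.trans hr₂B)
    (by
      intro x hx
      by_cases hxp : x ∈ posSet u
      · refine hr₁u x ?_ hxp
        have := hin x hx
        rw [mem_ball, dist_eq_norm]
        linarith
      · have : ¬ 0 < u x := fun h => hxp ⟨hr₂B (hin2 hx), h⟩
        refine (not_lt.1 this).trans ?_
        exact mul_nonneg (by positivity) (le_max_right _ _))
    hyu.le
    (by
      intro x hx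
      have := hL.dist_le_mul y (hin2 hyself) x (hin2 hx)
      rw [Real.dist_eq, dist_eq_norm, norm_sub_rev] at this
      have := (abs_le.1 this).2
      linarith)
    hlam0 (by rw [hτdef]; linarith) (by linarith)
    (by
      intro x hx
      have := hin x hx
      exact hr₃Q x (by rw [mem_ball, dist_eq_norm]; linarith))
    (by linarith) hF0
    (fun x hx => (le_abs_self _).trans (hF x (hin2 hx)))
    hr0
    (by
      have h1 : θ ^ 4 ≤ θ ^ 2 := pow_le_pow_of_le_one hθ.le hθ1 (by norm_num)
      nlinarith)
  rw [← hW] at key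
  have h1 : W * h ≤ W * δ := mul_le_mul_of_nonneg_left hhδ.le hW0
  have h2 : (q - ℓ) / 2 * GG m τ r ≤ (q - ℓ - θ ^ 2) * GG m τ r := by
    gcongr
    linarith
  linarith

/-- **Proposition 3.2.** If a ball `B = B_s(z)` contained in the zero set of a weak solution `u`
touches the free boundary at `x₀`, then `limsup_{x → x₀, u(x) > 0} u(x)/dist(x,B) ≥ Q(x₀)`. -/
theorem nondegeneracy_at_touching_ball
    (hn : 2 ≤ n) (f Q u : EuclideanSpace ℝ (Fin n) → ℝ) (Qmin Qmax : ℝ)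
    (hf : ContDiffOn ℝ (⊤ : ℕ∞) f (ball 0 1))
    (hf0 : ∀ x ∈ ball (0 : EuclideanSpace ℝ (Fin n)) 1, 0 ≤ f x)
    (hQ : ContDiffOn ℝ (⊤ : ℕ∞) Q (ball 0 1)) (hQmin : 0 < Qmin)
    (hQb : ∀ x ∈ ball (0 : EuclideanSpace ℝ (Fin n)) 1, Qmin ≤ Q x ∧ Q x ≤ Qmax)
    (hu : IsWeakSolution f Q u)
    (x₀ z : EuclideanSpace ℝ (Fin n)) (s : ℝ) (hs : 0 < s)
    (hx₀ : x₀ ∈ frontier (posSet u) ∩ ball (0 : EuclideanSpace ℝ (Fin n)) 1)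
    (hB : ball z s ⊆ ball (0 : EuclideanSpace ℝ (Fin n)) 1)
    (hBzero : ∀ x ∈ ball z s, u x = 0)
    (htouch : x₀ ∈ sphere z s) :
    ∀ ε : ℝ, 0 < ε → ∀ ρ : ℝ, 0 < ρ →
      ∃ x ∈ ball x₀ ρ, x ∈ posSet u ∧
        (Q x₀ - ε) * Metric.infDist x (ball z s) ≤ u x := by
  intro ε hε ρ hρ
  by_contra hcon
  push Not at hcon
  obtain ⟨m, rfl⟩ : ∃ m, n = m + 1 := ⟨n - 1, by omega⟩
  have hm : 1 ≤ m := by omega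
  have hclose : ∃ x ∈ ball x₀ ρ, x ∈ posSet u := by
    have h1 : x₀ ∈ closure (posSet u) := hx₀.1.1
    obtain ⟨x, hx, hxd⟩ := Metric.mem_closure_iff.1 h1 ρ hρ
    exact ⟨x, by rw [mem_ball, dist_comm]; exact hxd, hx⟩
  have ha₀ : 0 < Q x₀ - ε := by
    by_contra ha
    obtain ⟨x, hx, hxp⟩ := hclose
    have h1 := hcon x hx hxp
    have h2 : (Q x₀ - ε) * Metric.infDist x (ball z s) ≤ 0 :=
      mul_nonpos_of_nonpos_of_nonneg (not_lt.1 ha) Metric.infDist_nonneg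
    have := hxp.2
    linarith
  -- the smaller ball
  have hxz : ‖x₀ - z‖ = s := by rwa [mem_sphere, dist_eq_norm] at htouch
  set z' : EuclideanSpace ℝ (Fin (m+1)) := midpoint ℝ x₀ z with hz'
  have hz'z : ‖z' - z‖ = s / 2 := by
    rw [← dist_eq_norm, hz', dist_midpoint_right, dist_eq_norm, hxz]
    simp; ring
  have hz'x : ‖x₀ - z'‖ = s / 2 := by
    rw [← dist_eq_norm, hz', dist_left_midpoint, dist_eq_norm, hxz]
    simp; ring
  have hsub : ball z' (s / 2) ⊆ ball z s := by
    intro x hx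
    rw [mem_ball, dist_eq_norm] at hx ⊢
    have := norm_sub_le_norm_sub_add_norm_sub x z' z
    linarith
  have hsub' : closedBall z' (s / 2) ⊆ ball (0 : EuclideanSpace ℝ (Fin (m+1))) 1 := by
    intro x hx
    by_cases hxx : x = x₀
    · rw [hxx]; exact hx₀.2
    apply hB
    rw [mem_closedBall, dist_eq_norm] at hx
    rw [mem_ball, dist_eq_norm]
    rcases lt_or_eq_of_le hx with hx | hx
    · have := norm_sub_le_norm_sub_add_norm_sub x z' z
      linarith
    · have hle := norm_sub_le_norm_sub_add_norm_sub x z' z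
      refine lt_of_le_of_ne (by linarith) fun heq => hxx ?_
      have hadd : ‖(x - z') + (z' - z)‖ = ‖x - z'‖ + ‖z' - z‖ := by
        rw [sub_add_sub_cancel, heq, hx, hz'z]; ring
      have hray := sameRay_iff_norm_add.2 hadd
      have h1 : x - z' = z' - z := hray.norm_eq_iff.1 (by rw [hx, hz'z])
      have h2 : z' - z = x₀ - z' := by
        rw [hz', midpoint_sub_right, left_sub_midpoint]
      rw [h2] at h1
      exact sub_left_injective h1
  refine main_closed hm (z := z') (s := s / 2) (a₀ := Q x₀ - ε) (ρ := ρ) hf.continuousOn hf0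
    hQ.continuousOn hQmin (fun x hx => (hQb x hx).1) hu (by linarith) hx₀.1 hx₀.2 hsub'
    (fun x hx => hBzero x (hsub hx)) (by rw [mem_sphere, dist_eq_norm, hz'x]) ha₀.le (by linarith)
    hρ ?_
  intro x hx hxp
  refine (hcon x hx hxp).le.trans (mul_le_mul_of_nonneg_left ?_ ha₀.le)
  refine le_trans ?_ (infDist_ball_le x z' (by linarith : 0 < s / 2))
  exact Metric.infDist_le_infDist_of_subset hsub (nonempty_ball.2 (by linarith))
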